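/- arXiv:1010.5410 — 6 statements merged into one kernel-verified Lean document; each statement's English description precedes it below -/
import Mathlib

section
/- Assume f: Λ × X → ℝ ∪ {+∞} is a family of functionals with f(λ;·) lower semicontinuous for every λ ∈ Λ, and that hypotheses (H2), (H3) and (H4) hold. Let λ_0 ∈ Λ be such that there exist Q(λ_0) ∈ ℝ and a strictly increasing sequence (λ_h) ⊂ Λ converging to λ_0 with (c(λ_h) − c(λ_0))/(λ_0 − λ_h) ≤ Q(λ_0) for all h ≥ 1. Then there exist h̄ ≥ 1, two sequences of paths (γ_h)_{h ≥ h̄}, (γ̃_h)_{h ≥ h̄} ⊂ Γ with γ_h(𝔻) ⊆ S and γ̃_h(𝔻) ⊆ S, a sequence (M_h)_{h ≥ h̄} of nonempty closed subsets of 𝔻 disjoint from 𝕊, and a constant M(λ_0) > 0 such that, for every h ≥ h̄: (a) ‖γ̃_h(t) − γ_h(t)*‖_V ≤ λ_0 − λ_h for all t ∈ M_h; (b) for every t ∈ 𝔻, if f(λ_0; γ̃_h(t)) ≥ c(λ_0) − (λ_0 − λ_h) then ‖γ̃_h(t)‖ ≤ M(λ_0); and (c) for every ε > 0 one has sup_{t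 ∈ 𝔻} f(λ_0; γ̃_h(t)) ≤ sup_{t ∈ 𝔻} f(λ_0; γ_h(t)) ≤ c(λ_0) + ε for all h ≥ h̄ sufficiently large. -/
/-!
The symmetrized paths are obtained by a collar construction.  Take an almost optimal path
`γ ∈ Γ`, replace it by the path `γ̂` of (H4), polarize it by `H₀`, shrink the result to the ball
`‖t‖ ≤ 1/2` and extend it constantly along radii; this is `γ_h` (`exists_collared_path`).  On the
collar `1/2 ≤ ‖t‖ ≤ 1` it only takes boundary values, so the energy there is at most `a(λ)`.

Since the points of `γ_h` are fixed by the polarizer `H₀`, and since the space of polarizers is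
path connected, `γ_h` can be deformed continuously into its iterated polarizations, without leaving
`S` and without increasing any energy (`homotopicWith_polIter`).  The path `γ̃_h` runs through this
deformation forwards and then backwards as `‖t‖` goes from `1/2` to `1`; it agrees with `γ_h` for
`‖t‖ ≤ 1/2` and on the sphere, and at a point with `‖t‖ = 3/4` it is a late iterated
polarization of `γ_h(t)`, hence close to `γ_h(t)*` in `V` (`exists_symmetrized_path`).

If `c(λ₀)` is finite, the bound on the difference quotient of `c` allows paths with
`f(λ_h; γ_h(t)) ≤ c(λ₀) + (Q + 1)(λ₀ - λ_h)`, and (b), (c) follow from (H3) applied along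
subsequences violating them (`energy_control`).  The value `c(λ₀) = +∞` is also possible; then
(c) is trivial, one fixed `γ` serves for all `h`, and the points in (b) have infinite energy, so
they lie outside the collar, where `γ̃_h` does not depend on `h` and is bounded by compactness.
-/

open Filter Set Metric

noncomputable section

/-- The weak slope `|df|(u)` of a functional `f` on a metric space, as an
element of `[0,+∞]`: the supremum of the `σ ≥ 0` for which there exist `δ > 0` and a
continuous map `Φ : B(u,δ) × [0,δ] → X` with `d(Φ(v,t),v) ≤ t` and
`f(Φ(v,t)) ≤ f(v) - σ t`. -/
def weakSlope {X : Type*} [PseudoMetricSpace X] (f : X → ℝ) (u : X) : ENNReal :=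
  sSup {s : ENNReal | ∃ σ : ℝ, 0 ≤ σ ∧ s = ENNReal.ofReal σ ∧
    ∃ δ : ℝ, 0 < δ ∧ ∃ Φ : X × ℝ → X,
      ContinuousOn Φ (Metric.ball u δ ×ˢ Set.Icc 0 δ) ∧
      ∀ v ∈ Metric.ball u δ, ∀ t ∈ Set.Icc (0:ℝ) δ,
        dist (Φ (v, t)) v ≤ t ∧ f (Φ (v, t)) ≤ f v - σ * t}

/-- Iterated polarization `u^{H_0 H_1 ⋯ H_{m-1}}`. -/
def polIter {X H : Type*} (pol : X → H → X) (Hm : ℕ → H) (u : X) : ℕ → X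
  | 0 => u
  | m + 1 => pol (polIter pol Hm u m) (Hm m)

/-- The abstract symmetrization framework: `X ↪ V` real Banach spaces, `S ⊆ X`,
a path-connected space `H` of polarizers, a symmetrization `symm : S → S`, a continuous
polarization `pol : S × H → S` satisfying (i)-(iii), together with the Lipschitz
retraction `Θ : (X,‖·‖_V) → (S,‖·‖_V)` used to extend the symmetrization to `X`. -/
structure SymmFramework (X V H : Type*) [NormedAddCommGroup X] [NormedSpace ℝ X]
    [NormedAddCommGroup V] [NormedSpace ℝ V]
    [TopologicalSpace H] [PathConnectedSpace H] where
  /-- the continuous embedding `X ↪ V` -/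
  ι : X →L[ℝ] V
  ι_inj : Function.Injective ι
  S : Set X
  symm : X → X
  pol : X → H → X
  symm_mem : ∀ u ∈ S, symm u ∈ S
  pol_mem : ∀ u ∈ S, ∀ h : H, pol u h ∈ S
  pol_cont : ContinuousOn (fun p : X × H => pol p.1 p.2) (S ×ˢ (Set.univ : Set H))
  pol_symm : ∀ u ∈ S, ∀ h : H, pol (symm u) h = symm u
  symm_pol : ∀ u ∈ S, ∀ h : H, symm (pol u h) = symm u
  pol_idem : ∀ u ∈ S, ∀ h : H, pol (pol u h) h = pol u h
  polar_approx : ∃ Hm : ℕ → H, ∀ u ∈ S,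
    Filter.Tendsto (fun m => ι (polIter pol Hm u m)) Filter.atTop (nhds (ι (symm u)))
  pol_nonexpansive : ∀ u ∈ S, ∀ v ∈ S, ∀ h : H,
    ‖ι (pol u h) - ι (pol v h)‖ ≤ ‖ι u - ι v‖
  Θ : X → X
  Θ_mem : ∀ u : X, Θ u ∈ S
  Θ_id : ∀ u ∈ S, Θ u = u
  CΘ : ℝ
  CΘ_pos : 0 < CΘ
  Θ_lip : ∀ u v : X, ‖ι (Θ u) - ι (Θ v)‖ ≤ CΘ * ‖ι u - ι v‖

/-- The symmetrization extended to the whole of `X`: `u* := (Θ u)*`. -/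
def SymmFramework.symmX {X V H : Type*} [NormedAddCommGroup X] [NormedSpace ℝ X]
    [NormedAddCommGroup V] [NormedSpace ℝ V] [TopologicalSpace H] [PathConnectedSpace H]
    (F : SymmFramework X V H) (u : X) : X :=
  F.symm (F.Θ u)

/-- `𝔻`, the closed unit ball of `ℝ^m`. -/
def mpD (m : ℕ) : Set (EuclideanSpace ℝ (Fin m)) := Metric.closedBall 0 1

/-- `𝕊`, the unit sphere of `ℝ^m`. -/
def mpS (m : ℕ) : Set (EuclideanSpace ℝ (Fin m)) := Metric.sphere 0 1

/-- The class `Γ = {γ ∈ C(𝔻,X) : γ|_𝕊 ∈ Γ₀}` of admissible mountain-pass paths. -/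
def mpGamma {X : Type*} [TopologicalSpace X] (m : ℕ) (Γ0 : Set (↥(mpS m) → X)) :
    Set (EuclideanSpace ℝ (Fin m) → X) :=
  {γ | ContinuousOn γ (mpD m) ∧ (mpS m).restrict γ ∈ Γ0}

/-- The Mountain Pass level `c = inf_{γ ∈ Γ} sup_{t ∈ 𝔻} g(γ(t))`. -/
def cLevel {X R : Type*} [TopologicalSpace X] [SupSet R] [InfSet R]
    (m : ℕ) (Γ0 : Set (↥(mpS m) → X)) (g : X → R) : R :=
  sInf ((fun γ => sSup ((fun t => g (γ t)) '' mpD m)) '' mpGamma m Γ0)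

/-- The boundary level `a = sup_{γ₀ ∈ Γ₀} sup_{τ ∈ 𝕊} g(γ₀(τ))`. -/
def aLevel {X R : Type*} [SupSet R]
    (m : ℕ) (Γ0 : Set (↥(mpS m) → X)) (g : X → R) : R :=
  sSup ((fun γ0 => sSup (Set.range fun τ => g (γ0 τ))) '' Γ0)

/-- `(u_n)` is a symmetric bounded Palais–Smale sequence at level `c` for `g`:
it is bounded, `g(u_n) → c`, `|dg|(u_n) → 0` and `‖u_n - u_n*‖_V → 0`. -/
def SBPSSeq {X V H : Type*} [NormedAddCommGroup X] [NormedSpace ℝ X]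
    [NormedAddCommGroup V] [NormedSpace ℝ V] [TopologicalSpace H] [PathConnectedSpace H]
    (F : SymmFramework X V H) (g : X → ℝ) (c : ℝ) (u : ℕ → X) : Prop :=
  (∃ M : ℝ, ∀ n, ‖u n‖ ≤ M) ∧
  Filter.Tendsto (fun n => g (u n)) Filter.atTop (nhds c) ∧
  Filter.Tendsto (fun n => weakSlope g (u n)) Filter.atTop (nhds 0) ∧
  Filter.Tendsto (fun n => ‖F.ι (u n) - F.ι (F.symmX (u n))‖) Filter.atTop (nhds 0)

/-- The symmetric bounded Palais–Smale condition at level `c`: every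
`(SBPS)_c`-sequence has a subsequence converging in `X`. -/
def SBPSCond {X V H : Type*} [NormedAddCommGroup X] [NormedSpace ℝ X]
    [NormedAddCommGroup V] [NormedSpace ℝ V] [TopologicalSpace H] [PathConnectedSpace H]
    (F : SymmFramework X V H) (g : X → ℝ) (c : ℝ) : Prop :=
  ∀ u : ℕ → X, SBPSSeq F g c u →
    ∃ (φ : ℕ → ℕ) (x : X), StrictMono φ ∧
      Filter.Tendsto (fun k => u (φ k)) Filter.atTop (nhds x)

end

open scoped unitInterval

/-- The radial retraction of `ℝ^m` onto the closed unit ball. -/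
noncomputable def ballRetr (m : ℕ) (t : EuclideanSpace ℝ (Fin m)) : EuclideanSpace ℝ (Fin m) :=
  (max 1 ‖t‖)⁻¹ • t

lemma continuous_ballRetr (m : ℕ) : Continuous (ballRetr m) := by
  unfold ballRetr
  have hc : Continuous fun t : EuclideanSpace ℝ (Fin m) => max 1 ‖t‖ := by fun_prop
  refine (hc.inv₀ fun t => ?_).smul continuous_id
  exact (lt_of_lt_of_le one_pos (le_max_left _ _)).ne'

lemma ballRetr_mem (m : ℕ) (t : EuclideanSpace ℝ (Fin m)) : ballRetr m t ∈ mpD m := by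
  have h1 : 0 < max 1 ‖t‖ := lt_of_lt_of_le one_pos (le_max_left _ _)
  rw [mpD, mem_closedBall_zero_iff, ballRetr, norm_smul, norm_inv, Real.norm_of_nonneg h1.le,
    inv_mul_le_iff₀ h1, mul_one]
  exact le_max_right _ _

lemma ballRetr_of_mem {m : ℕ} {t : EuclideanSpace ℝ (Fin m)} (ht : t ∈ mpD m) :
    ballRetr m t = t := by
  rw [mpD, mem_closedBall_zero_iff] at ht
  rw [ballRetr, max_eq_left ht, inv_one, one_smul]

lemma ballRetr_mem_sphere {m : ℕ} {t : EuclideanSpace ℝ (Fin m)} (ht : 1 ≤ ‖t‖) :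
    ballRetr m t ∈ mpS m := by
  rw [mpS, mem_sphere_zero_iff_norm, ballRetr, max_eq_right ht, norm_smul, norm_inv, norm_norm]
  exact inv_mul_cancel₀ (by linarith)

lemma mpS_subset_mpD (m : ℕ) : mpS m ⊆ mpD m := sphere_subset_closedBall

lemma le_aLevel {X : Type*} {m : ℕ} {Γ0 : Set (↥(mpS m) → X)} (g : X → EReal)
    {γ : EuclideanSpace ℝ (Fin m) → X} (hγ : (mpS m).domRestrict γ ∈ Γ0)
    {t : EuclideanSpace ℝ (Fin m)} (ht : t ∈ mpS m) : g (γ t) ≤ aLevel m Γ0 g :=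
  (le_sSup (mem_range_self (f := fun τ => g ((mpS m).domRestrict γ τ)) ⟨t, ht⟩)).trans
    (le_sSup (mem_image_of_mem (fun γ0 : ↥(mpS m) → X => sSup (range fun τ => g (γ0 τ))) hγ))

section Paths

variable {X V H : Type*} [NormedAddCommGroup X] [NormedSpace ℝ X]
  [NormedAddCommGroup V] [NormedSpace ℝ V] [TopologicalSpace H] [PathConnectedSpace H]

/-- A compact family in `S` fixed by one polarizer can be deformed into its iterated
polarizations inside `S`, without increasing the energies.  After the `k`-th step the family is
fixed by the last polarizer used, so moving that polarizer along a path to the next one starts the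
following step continuously. -/
lemma homotopicWith_polIter {T : Type*} [TopologicalSpace T] (F : SymmFramework X V H)
    {L : Set ℝ} {f : ℝ → X → EReal}
    (hpol : ∀ lam ∈ L, ∀ h : H, ∀ u ∈ F.S, f lam (F.pol u h) ≤ f lam u)
    (g : C(T, X)) (hg : ∀ t, g t ∈ F.S) (h0 : H) (hfix : ∀ t, F.pol (g t) h0 = g t)
    (Hm : ℕ → H) (k : ℕ) :
    ∃ gk : C(T, X), (∀ t, gk t = polIter F.pol Hm (g t) k) ∧
      ContinuousMap.HomotopicWith g gk
        (fun w => ∀ t, w t ∈ F.S ∧ ∀ lam ∈ L, f lam (w t) ≤ f lam (g t)) ∧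
      (∀ t, gk t ∈ F.S ∧ ∀ lam ∈ L, f lam (gk t) ≤ f lam (g t)) ∧
      ∃ h : H, ∀ t, F.pol (gk t) h = gk t := by
  induction k with
  | zero =>
    have hP : ∀ t, g t ∈ F.S ∧ ∀ lam ∈ L, f lam (g t) ≤ f lam (g t) :=
      fun t => ⟨hg t, fun _ _ => le_rfl⟩
    exact ⟨g, fun _ => rfl, .refl g hP, hP, h0, hfix⟩
  | succ k ih =>
    obtain ⟨gk, hgk, hhom, hP, h, hh⟩ := ih
    obtain ⟨p⟩ := PathConnectedSpace.joined h (Hm k)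
    have hcont : Continuous (fun x : I × T => F.pol (gk x.2) (p x.1)) :=
      F.pol_cont.comp_continuous (f := fun x : I × T => (gk x.2, p x.1)) (by fun_prop)
        (fun x => ⟨(hP x.2).1, mem_univ _⟩)
    have hpP : ∀ (h : H) t, F.pol (gk t) h ∈ F.S ∧
        ∀ lam ∈ L, f lam (F.pol (gk t) h) ≤ f lam (g t) := fun h t =>
      ⟨F.pol_mem _ (hP t).1 h,
        fun lam hl => (hpol lam hl h _ (hP t).1).trans ((hP t).2 lam hl)⟩
    refine ⟨⟨fun t => F.pol (gk t) (Hm k), ?_⟩, fun t => ?_, ?_, hpP (Hm k), Hm k,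
      fun t => F.pol_idem _ (hP t).1 _⟩
    · simpa [Function.comp_def] using hcont.comp (Continuous.prodMk_right (1 : I))
    · simp [polIter, hgk]
    · refine hhom.trans ⟨⟨⟨⟨fun x => F.pol (gk x.2) (p x.1), hcont⟩, ?_, ?_⟩, ?_⟩⟩
      · intro t
        simp [hh]
      · intro t
        simp
      · intro s t
        exact hpP (p s) t

/-- Every path of `Γ` can be replaced by an `S`-valued one, of no larger energy and fixed
pointwise by one polarizer, whose energy on `1/2 ≤ ‖t‖` is controlled by the boundary level: it is
made constant along radii there. -/
lemma exists_collared_path (F : SymmFramework X V H) {m : ℕ} {L : Set ℝ} {f : ℝ → X → EReal}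
    {Γ0 : Set (↥(mpS m) → X)}
    (H4a : ∀ γ ∈ mpGamma m Γ0, ∃ γh ∈ mpGamma m Γ0, ∃ h0 : H,
      (∀ t ∈ mpD m, γh t ∈ F.S) ∧
      ((fun τ : ↥(mpS m) => F.pol (γh τ.1) h0) ∈ Γ0) ∧
      (∀ t ∈ mpD m, ∀ lam ∈ L, f lam (γh t) ≤ f lam (γ t)))
    (hpol : ∀ lam ∈ L, ∀ h : H, ∀ u ∈ F.S, f lam (F.pol u h) ≤ f lam u)
    {γ : EuclideanSpace ℝ (Fin m) → X} (hγ : γ ∈ mpGamma m Γ0) :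
    ∃ γ1 : EuclideanSpace ℝ (Fin m) → X, Continuous γ1 ∧ (mpS m).domRestrict γ1 ∈ Γ0 ∧
      (∀ t, γ1 t ∈ F.S) ∧ (∃ h0 : H, ∀ t, F.pol (γ1 t) h0 = γ1 t) ∧
      (∀ t, ∃ t' ∈ mpD m, ∀ lam ∈ L, f lam (γ1 t) ≤ f lam (γ t')) ∧
      (∀ t, 1 / 2 ≤ ‖t‖ → ∀ lam, f lam (γ1 t) ≤ aLevel m Γ0 (f lam)) := by
  obtain ⟨γh, hγh, h0, hS, hbd, hle⟩ := H4a γ hγ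
  have hmem : ∀ t, γh (ballRetr m ((2 : ℝ) • t)) ∈ F.S := fun t => hS _ (ballRetr_mem m _)
  have hc : Continuous fun t => γh (ballRetr m ((2 : ℝ) • t)) :=
    hγh.1.comp_continuous ((continuous_ballRetr m).comp (continuous_const_smul _))
      (fun t => ballRetr_mem m _)
  refine ⟨fun t => F.pol (γh (ballRetr m ((2 : ℝ) • t))) h0, ?_, ?_, ?_, ⟨h0, ?_⟩, ?_, ?_⟩
  · exact F.pol_cont.comp_continuous
      (f := fun t => (γh (ballRetr m ((2 : ℝ) • t)), h0)) (hc.prodMk continuous_const)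
      (fun t => ⟨hmem t, mem_univ _⟩)
  · convert hbd using 1
    funext τ
    have hτ : ‖τ.1‖ = 1 := mem_sphere_zero_iff_norm.1 τ.2
    have h2 : ‖(2 : ℝ) • τ.1‖ = 2 := by rw [norm_smul, hτ]; norm_num
    have : ballRetr m ((2 : ℝ) • τ.1) = τ.1 := by
      rw [ballRetr, h2, smul_smul]; norm_num
    simp only [domRestrict_apply, this]
  · exact fun t => F.pol_mem _ (hmem t) _
  · exact fun t => F.pol_idem _ (hmem t) _
  · exact fun t => ⟨_, ballRetr_mem m ((2 : ℝ) • t), fun lam hl =>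
      (hpol lam hl h0 _ (hmem t)).trans (hle _ (ballRetr_mem m _) lam hl)⟩
  · intro t ht lam
    have h2 : 1 ≤ ‖(2 : ℝ) • t‖ := by rw [norm_smul]; norm_num; linarith
    exact le_aLevel (f lam) (γ := fun s => F.pol (γh s) h0) hbd (ballRetr_mem_sphere h2)

/-- An `S`-valued path fixed pointwise by one polarizer can be modified on the open collar
`1/2 < ‖t‖ < 1`, without increasing the energies, so that at some point `t₀` of the open unit ball
it comes within `ε` in `V` of the symmetrization of the original path. -/
lemma exists_symmetrized_path (F : SymmFramework X V H) {m : ℕ} (hm : 1 ≤ m) {L : Set ℝ}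
    {f : ℝ → X → EReal} {Γ0 : Set (↥(mpS m) → X)}
    (hpol : ∀ lam ∈ L, ∀ h : H, ∀ u ∈ F.S, f lam (F.pol u h) ≤ f lam u)
    {γ1 : EuclideanSpace ℝ (Fin m) → X} (hc : Continuous γ1) (hbd : (mpS m).domRestrict γ1 ∈ Γ0)
    (hS : ∀ t, γ1 t ∈ F.S) (hfix : ∃ h0 : H, ∀ t, F.pol (γ1 t) h0 = γ1 t)
    {ε : ℝ} (hε : 0 < ε) :
    ∃ γ2 : EuclideanSpace ℝ (Fin m) → X, γ2 ∈ mpGamma m Γ0 ∧ (∀ t ∈ mpD m, γ2 t ∈ F.S) ∧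
      (∀ t ∈ mpD m, ∀ lam ∈ L, f lam (γ2 t) ≤ f lam (γ1 t)) ∧
      (∀ t ∈ mpD m, ‖t‖ ≤ 1 / 2 → γ2 t = γ1 t) ∧
      ∃ t0 ∈ mpD m, t0 ∉ mpS m ∧ ‖F.ι (γ2 t0) - F.ι (F.symm (γ1 t0))‖ ≤ ε := by
  obtain ⟨h0, hfix⟩ := hfix
  obtain ⟨Hm, hHm⟩ := F.polar_approx
  let t0 : EuclideanSpace ℝ (Fin m) := EuclideanSpace.single ⟨0, hm⟩ (3 / 4 : ℝ)
  have ht0 : ‖t0‖ = 3 / 4 := by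
    simp [t0]
  have ht0D : t0 ∈ mpD m := by rw [mpD, mem_closedBall_zero_iff, ht0]; norm_num
  obtain ⟨k, hk⟩ : ∃ k, ‖F.ι (polIter F.pol Hm (γ1 t0) k) - F.ι (F.symm (γ1 t0))‖ < ε := by
    obtain ⟨k, hk⟩ := ((Metric.tendsto_nhds.1 (hHm _ (hS t0))) ε hε).exists
    exact ⟨k, by rwa [dist_eq_norm] at hk⟩
  obtain ⟨gk, hgk, ⟨G⟩, -, -⟩ := homotopicWith_polIter F hpol
    (⟨fun t => γ1 t.1, by fun_prop⟩ : C(↥(mpD m), X)) (fun t => hS _) h0 (fun t => hfix _) Hm k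
  -- the tent function equal to `0` for `‖t‖ ≤ 1/2` and for `‖t‖ = 1`, and to `1` for `‖t‖ = 3/4`
  let φ : EuclideanSpace ℝ (Fin m) → I := fun t =>
    Set.projIcc 0 1 zero_le_one (1 - |4 * ‖t‖ - 3|)
  have hφ : Continuous φ := continuous_projIcc.comp (by fun_prop)
  let ρ : EuclideanSpace ℝ (Fin m) → ↥(mpD m) := fun t => ⟨ballRetr m t, ballRetr_mem m t⟩
  have hρ : Continuous ρ := (continuous_ballRetr m).subtype_mk _
  have hρD : ∀ t ∈ mpD m, (ρ t : EuclideanSpace ℝ (Fin m)) = t := fun t ht => ballRetr_of_mem ht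
  have hzero : ∀ t ∈ mpD m, 1 - |4 * ‖t‖ - 3| ≤ 0 → G (φ t, ρ t) = γ1 t := by
    intro t ht h
    have : φ t = 0 := Set.projIcc_of_le_left _ h
    rw [this, G.apply_zero]
    simp [hρD t ht]
  refine ⟨fun t => G (φ t, ρ t), ⟨?_, ?_⟩, ?_, ?_, ?_, t0, ht0D, ?_, ?_⟩
  · exact (G.continuous.comp (hφ.prodMk hρ)).continuousOn
  · convert hbd using 1
    funext τ
    have hτ : ‖τ.1‖ = 1 := mem_sphere_zero_iff_norm.1 τ.2
    exact hzero τ.1 (mpS_subset_mpD m τ.2) (by rw [hτ]; norm_num)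
  · intro t _
    exact (G.prop (φ t) (ρ t)).1
  · intro t ht lam hl
    have := (G.prop (φ t) (ρ t)).2 lam hl
    simpa [hρD t ht] using this
  · intro t ht h
    refine hzero t ht ?_
    have := neg_le_abs (4 * ‖t‖ - 3)
    linarith
  · rw [mpS, mem_sphere_zero_iff_norm, ht0]; norm_num
  · have : φ t0 = 1 := Set.projIcc_of_right_le _ (by rw [ht0]; norm_num)
    simp only [this, G.apply_one, hgk]
    simp only [ContinuousMap.coe_mk, hρD t0 ht0D]
    exact hk.le

end Paths

lemma sub_div_le_of_le {x y : EReal} {A B r : ℝ} (hr : 0 < r) (hx : x ≤ (A : EReal))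
    (hy : (B : EReal) ≤ y) : (x - y) / ((r : ℝ) : EReal) ≤ (((A - B) / r : ℝ) : EReal) := by
  have h := EReal.div_le_div_right_of_nonneg (EReal.coe_nonneg.2 hr.le) (EReal.sub_le_sub hx hy)
  rwa [← EReal.coe_sub, ← EReal.coe_div] at h

/-- Along any subsequence, points with `f(λ_h; u) ≤ c + (Q + 1)(λ₀ - λ_h)` and
`f(λ₀; u) ≥ c - (λ₀ - λ_h)` satisfy the hypotheses of (H3), since their difference quotients are
at most `Q + 2`. -/
lemma energy_control {X : Type*} [NormedAddCommGroup X] {L : Set ℝ} {f : ℝ → X → EReal}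
    (H3 : ∀ (lam : ℕ → ℝ) (u : ℕ → X) (lam' : ℝ),
      (∀ h, lam h ∈ L) → lam' ∈ L →
      StrictMono lam → Filter.Tendsto lam Filter.atTop (nhds lam') →
      ∀ C : ℝ,
        (∀ h, f (lam h) (u h) ≤ (C : EReal) ∧ -(f lam' (u h)) ≤ (C : EReal) ∧
          (f (lam h) (u h) - f lam' (u h)) / ((lam' - lam h : ℝ) : EReal) ≤ (C : EReal)) →
        (∃ M : ℝ, 0 ≤ M ∧ ∀ h, ‖u h‖ ≤ M) ∧
        (∀ ε : ℝ, 0 < ε → ∀ᶠ h in Filter.atTop,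
          f lam' (u h) ≤ f (lam h) (u h) + (ε : EReal)))
    {lam0 : ℝ} (hlam0 : lam0 ∈ L) {lamseq : ℕ → ℝ} (hmem : ∀ h, lamseq h ∈ L)
    (hmono : StrictMono lamseq) (hlim : Tendsto lamseq atTop (nhds lam0))
    (hlt : ∀ h, lamseq h < lam0) {c Q : ℝ} {φ : ℕ → ℕ} (hφ : StrictMono φ) {u : ℕ → X}
    (hup : ∀ k, f (lamseq (φ k)) (u k) ≤ ((c + (Q + 1) * (lam0 - lamseq (φ k)) : ℝ) : EReal))
    (hlow : ∀ k, ((c - (lam0 - lamseq (φ k)) : ℝ) : EReal) ≤ f lam0 (u k)) :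
    (∃ M : ℝ, ∀ k, ‖u k‖ ≤ M) ∧
      (∀ ε : ℝ, 0 < ε → ∀ᶠ k in atTop,
        f lam0 (u k) ≤ f (lamseq (φ k)) (u k) + (ε : EReal)) := by
  have hr0 : 0 < lam0 - lamseq 0 := sub_pos.2 (hlt 0)
  have key := H3 (fun k => lamseq (φ k)) u lam0 (fun k => hmem _) hlam0 (hmono.comp hφ)
    (hlim.comp hφ.tendsto_atTop)
    (|c| + |Q + 1| * (lam0 - lamseq 0) + (lam0 - lamseq 0) + |Q + 2|) ?_
  · obtain ⟨⟨M, -, hM⟩, h2⟩ := key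
    exact ⟨⟨M, hM⟩, h2⟩
  intro k
  have hr : 0 < lam0 - lamseq (φ k) := sub_pos.2 (hlt _)
  have hr1 : lam0 - lamseq (φ k) ≤ lam0 - lamseq 0 := by
    have := hmono.monotone (Nat.zero_le (φ k)); linarith
  have hQ1 : (Q + 1) * (lam0 - lamseq (φ k)) ≤ |Q + 1| * (lam0 - lamseq 0) :=
    mul_le_mul (le_abs_self _) hr1 hr.le (abs_nonneg _)
  have hQ0 : 0 ≤ |Q + 1| * (lam0 - lamseq 0) := by positivity
  have := le_abs_self c
  have := neg_abs_le c
  have := le_abs_self (Q + 2)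
  have := abs_nonneg (Q + 2)
  have := abs_nonneg c
  refine ⟨(hup k).trans (EReal.coe_le_coe_iff.2 (by linarith)), ?_, ?_⟩
  · refine (EReal.neg_le_neg_iff.2 (hlow k)).trans ?_
    rw [← EReal.coe_neg]
    exact EReal.coe_le_coe_iff.2 (by linarith)
  · refine (sub_div_le_of_le hr (hup k) (hlow k)).trans (EReal.coe_le_coe_iff.2 ?_)
    rw [div_le_iff₀ hr]
    have h1 : (Q + 2) * (lam0 - lamseq (φ k)) ≤
        (|c| + |Q + 1| * (lam0 - lamseq 0) + (lam0 - lamseq 0) + |Q + 2|) *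
          (lam0 - lamseq (φ k)) := mul_le_mul_of_nonneg_right (by linarith) hr.le
    linarith

/-- **Lemma (symmetric almost-optimal paths).** Let `f(λ;·) : X → ℝ ∪ {+∞}` be lower
semicontinuous for every `λ ∈ Λ = [a,b]` and assume (H2), (H3), (H4). Let `λ₀ ∈ Λ` admit
`Q ∈ ℝ` and a strictly increasing sequence `(λ_h) ⊆ Λ` converging to `λ₀` with
`(c(λ_h) - c(λ₀))/(λ₀ - λ_h) ≤ Q` for all `h`. Then there exist `h̄`, paths
`(γ_h), (γ̃_h) ⊆ Γ` with images in `S`, nonempty closed sets `M_h ⊆ 𝔻` disjoint from `𝕊`,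
and a constant `M(λ₀) > 0` satisfying (a), (b), (c). -/
theorem symmetric_paths_lemma
    {X V H : Type*} [NormedAddCommGroup X] [NormedSpace ℝ X] [CompleteSpace X]
    [NormedAddCommGroup V] [NormedSpace ℝ V] [CompleteSpace V]
    [TopologicalSpace H] [PathConnectedSpace H]
    (F : SymmFramework X V H)
    (m : ℕ) (hm : 1 ≤ m)
    (a b : ℝ) (hab : a ≤ b)
    (f : ℝ → X → EReal)
    (hlsc : ∀ lam ∈ Set.Icc a b, LowerSemicontinuous (f lam))
    (Γ0 : Set (↥(mpS m) → X))
    (hΓ0 : ∀ γ0 ∈ Γ0, Continuous γ0)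
    (hΓne : (mpGamma m Γ0).Nonempty)
    -- (H2): uniform mountain-pass geometry, `c(λ) > a(λ)`
    (H2 : ∀ lam ∈ Set.Icc a b, aLevel m Γ0 (f lam) < cLevel m Γ0 (f lam))
    -- (H3)
    (H3 : ∀ (lam : ℕ → ℝ) (u : ℕ → X) (lam' : ℝ),
      (∀ h, lam h ∈ Set.Icc a b) → lam' ∈ Set.Icc a b →
      StrictMono lam → Filter.Tendsto lam Filter.atTop (nhds lam') →
      ∀ C : ℝ,
        (∀ h, f (lam h) (u h) ≤ (C : EReal) ∧ -(f lam' (u h)) ≤ (C : EReal) ∧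
          (f (lam h) (u h) - f lam' (u h)) / ((lam' - lam h : ℝ) : EReal) ≤ (C : EReal)) →
        (∃ M : ℝ, 0 ≤ M ∧ ∀ h, ‖u h‖ ≤ M) ∧
        (∀ ε : ℝ, 0 < ε → ∀ᶠ h in Filter.atTop,
          f lam' (u h) ≤ f (lam h) (u h) + (ε : EReal)))
    -- (H4), first part: symmetrizing paths
    (H4a : ∀ γ ∈ mpGamma m Γ0, ∃ γh ∈ mpGamma m Γ0, ∃ h0 : H,
      (∀ t ∈ mpD m, γh t ∈ F.S) ∧
      ((fun τ : ↥(mpS m) => F.pol (γh τ.1) h0) ∈ Γ0) ∧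
      (∀ t ∈ mpD m, ∀ lam ∈ Set.Icc a b, f lam (γh t) ≤ f lam (γ t)))
    -- (H4), second part: polarization does not increase the energy
    (H4b : ∀ lam ∈ Set.Icc a b, ∀ h : H, ∀ u ∈ F.S, f lam (F.pol u h) ≤ f lam u)
    -- the distinguished value `λ₀` and its approximating sequence
    (lam0 : ℝ) (hlam0 : lam0 ∈ Set.Icc a b)
    (Q : ℝ) (lamseq : ℕ → ℝ)
    (hseqmem : ∀ h, lamseq h ∈ Set.Icc a b)
    (hseqmono : StrictMono lamseq)
    (hseqlim : Filter.Tendsto lamseq Filter.atTop (nhds lam0))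
    (hQ : ∀ h, (cLevel m Γ0 (f (lamseq h)) - cLevel m Γ0 (f lam0)) /
      ((lam0 - lamseq h : ℝ) : EReal) ≤ (Q : EReal)) :
    ∃ (hbar : ℕ) (γs γts : ℕ → (EuclideanSpace ℝ (Fin m) → X))
      (Ms : ℕ → Set (EuclideanSpace ℝ (Fin m))) (Mc : ℝ),
      0 < Mc ∧
      (∀ h ≥ hbar,
        γs h ∈ mpGamma m Γ0 ∧ γts h ∈ mpGamma m Γ0 ∧
        (∀ t ∈ mpD m, γs h t ∈ F.S) ∧ (∀ t ∈ mpD m, γts h t ∈ F.S) ∧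
        (Ms h).Nonempty ∧ IsClosed (Ms h) ∧ Ms h ⊆ mpD m ∧ Disjoint (Ms h) (mpS m) ∧
        -- (a)
        (∀ t ∈ Ms h, ‖F.ι (γts h t) - F.ι (F.symm (γs h t))‖ ≤ lam0 - lamseq h) ∧
        -- (b)
        (∀ t ∈ mpD m,
          cLevel m Γ0 (f lam0) - ((lam0 - lamseq h : ℝ) : EReal) ≤ f lam0 (γts h t) →
          ‖γts h t‖ ≤ Mc)) ∧
      -- (c)
      (∀ ε : ℝ, 0 < ε → ∀ᶠ h in Filter.atTop,
        sSup ((fun t => f lam0 (γts h t)) '' mpD m) ≤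
          sSup ((fun t => f lam0 (γs h t)) '' mpD m) ∧
        sSup ((fun t => f lam0 (γs h t)) '' mpD m) ≤
          cLevel m Γ0 (f lam0) + (ε : EReal)) := by
  have hlt : ∀ h, lamseq h < lam0 := fun h =>
    (hseqmono (Nat.lt_succ_self h)).trans_le (hseqmono.monotone.ge_of_tendsto hseqlim _)
  have hr : ∀ h, 0 < lam0 - lamseq h := fun h => sub_pos.2 (hlt h)
  have hrlim : Tendsto (fun h => lam0 - lamseq h) atTop (nhds 0) := by
    simpa using hseqlim.const_sub lam0
  by_cases hctop : cLevel m Γ0 (f lam0) = ⊤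
  · obtain ⟨γ, hγ⟩ := hΓne
    obtain ⟨γ1, hc1, hb1, hS1, hfix1, -, hcol⟩ := exists_collared_path F H4a H4b hγ
    choose γ2 hΓ2 hS2 hle2 hin2 t0 ht0D ht0S ht0 using fun h =>
      exists_symmetrized_path F hm H4b hc1 hb1 hS1 hfix1 (hr h)
    obtain ⟨M, hM⟩ : ∃ M, ∀ t ∈ mpD m, ‖γ1 t‖ ≤ M :=
      (isCompact_closedBall (0 : EuclideanSpace ℝ (Fin m)) 1).exists_bound_of_continuousOn
        hc1.continuousOn
    have hΓ1 : γ1 ∈ mpGamma m Γ0 := ⟨hc1.continuousOn, hb1⟩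
    have htop : ∀ γ ∈ mpGamma m Γ0, sSup ((fun t => f lam0 (γ t)) '' mpD m) = ⊤ := fun γ hγ =>
      top_le_iff.1 (hctop ▸ sInf_le (mem_image_of_mem _ hγ))
    refine ⟨0, fun _ => γ1, γ2, fun h => {t0 h}, max M 1, by positivity, fun h _ => ?_, ?_⟩
    · refine ⟨hΓ1, hΓ2 h, fun t _ => hS1 t, hS2 h, singleton_nonempty _, isClosed_singleton,
        singleton_subset_iff.2 (ht0D h), disjoint_singleton_left.2 (ht0S h), ?_, ?_⟩
      · rintro t rfl
        exact ht0 h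
      · intro t ht hbig
        rw [hctop, EReal.top_sub_coe, top_le_iff] at hbig
        -- a point of infinite energy lies outside the collar, since `a(λ₀) < c(λ₀)`
        have hsmall : ‖t‖ ≤ 1 / 2 := by
          by_contra! hcon
          have h1 := (hle2 h t ht lam0 hlam0).trans (hcol t hcon.le lam0)
          exact absurd (h1.trans_lt (H2 lam0 hlam0)) (by simp [hbig])
        rw [hin2 h t ht hsmall]
        exact (hM t ht).trans (le_max_left _ _)
    · intro ε hε
      refine Eventually.of_forall fun h => ⟨?_, ?_⟩
      · rw [htop _ hΓ1]; exact le_top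
      · rw [hctop, EReal.top_add_coe]; exact le_top
  · obtain ⟨c, hc⟩ : ∃ c : ℝ, cLevel m Γ0 (f lam0) = (c : EReal) :=
      ⟨_, (EReal.coe_toReal hctop (bot_le.trans_lt (H2 lam0 hlam0)).ne').symm⟩
    have hclt : ∀ h, cLevel m Γ0 (f (lamseq h)) <
        ((c + (Q + 1) * (lam0 - lamseq h) : ℝ) : EReal) := by
      intro h
      have h1 := hQ h
      rw [hc, EReal.div_le_iff_le_mul (EReal.coe_pos.2 (hr h)) (EReal.coe_ne_top _),
        EReal.sub_le_iff_le_add (.inl (EReal.coe_ne_bot _)) (.inl (EReal.coe_ne_top _)),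
        ← EReal.coe_mul, ← EReal.coe_add] at h1
      refine h1.trans_lt (EReal.coe_lt_coe_iff.2 ?_)
      linarith [hr h]
    have hex : ∀ h, ∃ γ ∈ mpGamma m Γ0, ∀ t ∈ mpD m,
        f (lamseq h) (γ t) ≤ ((c + (Q + 1) * (lam0 - lamseq h) : ℝ) : EReal) := by
      intro h
      obtain ⟨_, ⟨γ, hγ, rfl⟩, hlt'⟩ := sInf_lt_iff.1 (hclt h)
      exact ⟨γ, hγ, fun t ht => (le_sSup (mem_image_of_mem _ ht)).trans hlt'.le⟩
    choose γ0 hγ0 hup0 using hex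
    choose γ1 hc1 hb1 hS1 hfix1 hle1 _ using fun h =>
      exists_collared_path F H4a H4b (hγ0 h)
    choose γ2 hΓ2 hS2 hle2 _ t0 ht0D ht0S ht0 using fun h =>
      exists_symmetrized_path F hm H4b (hc1 h) (hb1 h) (hS1 h) (hfix1 h) (hr h)
    have hup1 : ∀ h, ∀ t,
        f (lamseq h) (γ1 h t) ≤ ((c + (Q + 1) * (lam0 - lamseq h) : ℝ) : EReal) := by
      intro h t
      obtain ⟨t', ht', hle⟩ := hle1 h t
      exact (hle _ (hseqmem h)).trans (hup0 h t' ht')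
    obtain ⟨M, hM⟩ : ∃ M : ℝ, ∀ᶠ h in atTop, ∀ t ∈ mpD m,
        ((c - (lam0 - lamseq h) : ℝ) : EReal) ≤ f lam0 (γ2 h t) → ‖γ2 h t‖ ≤ M := by
      by_contra! hcon
      obtain ⟨φ, hφ, hφ'⟩ := extraction_forall_of_frequently fun n : ℕ => hcon n
      choose t ht hlow hbig using hφ'
      obtain ⟨⟨M, hM⟩, -⟩ := energy_control H3 hlam0 hseqmem hseqmono hseqlim hlt hφ
        (u := fun k => γ2 (φ k) (t k)) (c := c) (Q := Q)
        (fun k => (hle2 _ _ (ht k) _ (hseqmem _)).trans (hup1 _ _)) hlow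
      obtain ⟨n, hn⟩ := exists_nat_gt M
      exact absurd (hM n) (not_le.2 (hn.trans (hbig n)))
    obtain ⟨hbar, hhbar⟩ := eventually_atTop.1 hM
    refine ⟨hbar, γ1, γ2, fun h => {t0 h}, max M 1, by positivity, fun h hh => ?_, ?_⟩
    · refine ⟨⟨(hc1 h).continuousOn, hb1 h⟩, hΓ2 h, fun t _ => hS1 h t, hS2 h,
        singleton_nonempty _, isClosed_singleton,
        singleton_subset_iff.2 (ht0D h), disjoint_singleton_left.2 (ht0S h), ?_, ?_⟩
      · rintro t rfl
        exact ht0 h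
      · intro t ht hbig
        rw [hc, ← EReal.coe_sub] at hbig
        exact (hhbar h hh t ht hbig).trans (le_max_left _ _)
    · intro ε hε
      have hmain : ∀ᶠ h in atTop, ∀ t ∈ mpD m,
          f lam0 (γ1 h t) ≤ ((c + ε : ℝ) : EReal) := by
        by_contra! hcon
        obtain ⟨φ, hφ, hφ'⟩ := extraction_of_frequently_atTop hcon
        choose t ht hbig using hφ'
        obtain ⟨-, h3⟩ := energy_control H3 hlam0 hseqmem hseqmono hseqlim hlt hφ
          (u := fun k => γ1 (φ k) (t k)) (c := c) (Q := Q) (fun k => hup1 _ _)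
          (fun k => (EReal.coe_le_coe_iff.2 (by linarith [hr (φ k)])).trans (hbig k).le)
        have hsm : ∀ᶠ k in atTop, (Q + 1) * (lam0 - lamseq (φ k)) < ε / 2 := by
          have : Tendsto (fun k => (Q + 1) * (lam0 - lamseq (φ k))) atTop (nhds 0) := by
            simpa using (hrlim.comp hφ.tendsto_atTop).const_mul (Q + 1)
          exact this.eventually_lt_const (by positivity)
        obtain ⟨k, hk1, hk2⟩ := ((h3 (ε / 2) (by positivity)).and hsm).exists
        have h4 := hk1.trans (add_le_add_left (hup1 (φ k) (t k)) ((ε / 2 : ℝ) : EReal))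
        rw [← EReal.coe_add] at h4
        have h5 := EReal.coe_lt_coe_iff.1 ((hbig k).trans_le h4)
        linarith
      filter_upwards [hmain] with h hh
      refine ⟨?_, ?_⟩
      · refine sSup_le ?_
        rintro _ ⟨t, ht, rfl⟩
        exact (hle2 h t ht lam0 hlam0).trans (le_sSup (mem_image_of_mem _ ht))
      · refine sSup_le ?_
        rintro _ ⟨t, ht, rfl⟩
        rw [hc, ← EReal.coe_add]
        exact hh t ht
end

section
/- Let E be a real normed space, X an open subset of E, and f: X → ℝ a function of class C¹ on X. Then the weak slope of f (computed in the metric space X with the metric induced by the norm of E) satisfies |df|(u) = ‖df(u)‖ for every u ∈ X, where ‖df(u)‖ is the operator norm of the Fréchet differential of f at u. -/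
open Filter Set Metric

/-!
Upper bound: testing an admissible deformation at the centre `u` alone, the first-order expansion
of `f` at `u` gives `σ t ≤ (‖f' u‖ + ε) t` for small `t > 0`, hence `σ ≤ ‖f' u‖`.

Lower bound: for `r < ‖f' u‖` there is `w` in the unit ball with `r < f' u w`, and the translation
`Φ (v, t) = v - t w` is an admissible deformation of rate `r` near `u`. The uniform decrease in `v`
is exactly strict differentiability of `f` at `u`, which follows from the continuity of `f'`.
-/

/-- A deformation started at `u` alone cannot decrease `f` at a rate exceeding the norm of the
differential at `u`; no continuity of the path is needed. -/
theorem rate_le_norm_of_hasFDerivAt {E : Type*} [NormedAddCommGroup E] [NormedSpace ℝ E]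
    {f : E → ℝ} {A : E →L[ℝ] ℝ} {u : E} (hf : HasFDerivAt f A u) {σ δ : ℝ} (hδ : 0 < δ)
    (y : ℝ → E)
    (hy : ∀ t ∈ Set.Icc (0 : ℝ) δ, ‖y t - u‖ ≤ t ∧ f (y t) ≤ f u - σ * t) :
    σ ≤ ‖A‖ := by
  refine le_of_forall_pos_le_add fun ε hε => ?_
  obtain ⟨ρ, hρ, hb⟩ := Metric.eventually_nhds_iff.1 (hf.isLittleO.def hε)
  set t : ℝ := min δ (ρ / 2)
  have ht : 0 < t := lt_min hδ (half_pos hρ)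
  obtain ⟨h1, h2⟩ := hy t ⟨ht.le, min_le_left _ _⟩
  have h3 := hb (y := y t) (by
    rw [dist_eq_norm]
    linarith [min_le_right δ (ρ / 2)])
  have h4 : ‖A (y t - u)‖ ≤ ‖A‖ * t := (A.le_opNorm _).trans (by gcongr)
  have h5 : ε * ‖y t - u‖ ≤ ε * t := by gcongr
  rw [Real.norm_eq_abs] at h3 h4
  refine le_of_mul_le_mul_right ?_ ht
  linarith [(abs_le.1 h3).1, (abs_le.1 h4).1]

/-- Every rate `r` below the norm of a strict differential is realized by translation along a
fixed vector `-w` of norm at most one, uniformly in the starting point. -/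
theorem exists_uniform_descent {E : Type*} [NormedAddCommGroup E] [NormedSpace ℝ E]
    {f : E → ℝ} {A : E →L[ℝ] ℝ} {u : E} (hf : HasStrictFDerivAt f A u) {U : Set E}
    (hU : U ∈ nhds u) {r : ℝ} (hr : r < ‖A‖) :
    ∃ w : E, ‖w‖ ≤ 1 ∧ ∃ δ : ℝ, 0 < δ ∧ ∀ v ∈ Metric.ball u δ, ∀ t ∈ Set.Icc (0 : ℝ) δ,
      v - t • w ∈ U ∧ f (v - t • w) ≤ f v - r * t := by
  obtain ⟨w, hw, hrw⟩ : ∃ w : E, ‖w‖ ≤ 1 ∧ r < A w := by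
    obtain ⟨x, hx, hrx⟩ := A.exists_lt_apply_of_lt_opNorm hr
    rw [Real.norm_eq_abs] at hrx
    rcases lt_abs.1 hrx with h | h
    · exact ⟨x, hx.le, h⟩
    · exact ⟨-x, by simpa using hx.le, by simpa using h⟩
  have hε : 0 < A w - r := sub_pos.2 hrw
  obtain ⟨ρ, hρ, hb⟩ := Metric.eventually_nhds_iff.1 (hf.isLittleO.def hε)
  obtain ⟨ρ', hρ', hsub⟩ := Metric.mem_nhds_iff.1 hU
  -- Halving the radius keeps `v - t • w` within `ρ` and `ρ'` of `u`.
  refine ⟨w, hw, min ρ ρ' / 2, by positivity, fun v hv t ht => ?_⟩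
  rw [Metric.mem_ball] at hv
  have htw : ‖t • w‖ ≤ t := by
    rw [norm_smul, Real.norm_eq_abs, abs_of_nonneg ht.1]
    exact mul_le_of_le_one_right ht.1 hw
  have hd : dist (v - t • w) u < min ρ ρ' := by
    have h1 : dist (v - t • w) v ≤ t := by simpa [dist_eq_norm] using htw
    linarith [dist_triangle (v - t • w) v u, ht.2]
  have hmin := lt_min_iff.1 hd
  refine ⟨hsub hmin.2, ?_⟩
  have h := hb (y := (v - t • w, v)) (by
    rw [Prod.dist_eq]
    exact max_lt hmin.1 (by linarith [min_le_left ρ ρ', lt_min hρ hρ']))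
  have he : v - t • w - v = -(t • w) := by abel
  simp only [he, norm_neg, map_neg, map_smul, smul_eq_mul, Real.norm_eq_abs] at h
  have h5 : (A w - r) * ‖t • w‖ ≤ (A w - r) * t := by gcongr
  linarith [(abs_le.1 h).2]

/-- **Weak slope of a `C¹` function.** Let `E` be a real normed space, `U ⊆ E` open and
`f : E → ℝ` of class `C¹` on `U` (with Fréchet differential `f'` continuous on `U`). Then
the weak slope of `f`, computed in the metric space `U` (with the metric induced by the
norm of `E`), satisfies `|df|(u) = ‖df(u)‖` for every `u ∈ U`. -/
theorem weakSlope_eq_norm_fderiv {E : Type*} [NormedAddCommGroup E] [NormedSpace ℝ E]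
    (U : Set E) (hU : IsOpen U)
    (f : E → ℝ) (f' : E → (E →L[ℝ] ℝ))
    (hdiff : ∀ x ∈ U, HasFDerivAt f (f' x) x)
    (hcont : ContinuousOn f' U)
    (u : U) :
    weakSlope (fun x : U => f x.1) u = ENNReal.ofReal ‖f' u.1‖ := by
  apply le_antisymm
  · refine sSup_le ?_
    rintro s ⟨σ, -, rfl, δ, hδ, Φ, -, hΦ⟩
    refine ENNReal.ofReal_le_ofReal
      (rate_le_norm_of_hasFDerivAt (hdiff u u.2) hδ (fun t => (Φ (u, t)).1) fun t ht => ?_)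
    have h := hΦ u (Metric.mem_ball_self hδ) t ht
    rwa [Subtype.dist_eq, dist_eq_norm] at h
  · refine le_of_forall_lt fun c hc => ?_
    have hctop : c ≠ ⊤ := ne_top_of_lt hc
    have hc' : c.toReal < ‖f' u.1‖ := (ENNReal.lt_ofReal_iff_toReal_lt hctop).1 hc
    obtain ⟨r, hcr, hr⟩ := exists_between hc'
    have hr0 : 0 ≤ r := ENNReal.toReal_nonneg.trans hcr.le
    have hnhds : U ∈ nhds u.1 := hU.mem_nhds u.2
    have hstrict : HasStrictFDerivAt f (f' u.1) u.1 :=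
      hasStrictFDerivAt_of_hasFDerivAt_of_continuousAt
        (Filter.eventually_of_mem hnhds hdiff) (hcont.continuousAt hnhds)
    obtain ⟨w, hw, δ, hδ, hdesc⟩ := exists_uniform_descent hstrict hnhds hr
    refine lt_of_lt_of_le ((ENNReal.lt_ofReal_iff_toReal_lt hctop).2 hcr) (le_sSup ?_)
    classical
    -- `Φ` must be total with values in `U`; the value `u` is never used on `ball u δ ×ˢ Icc 0 δ`.
    let Φ : U × ℝ → U := fun p =>
      if h : p.1.1 - p.2 • w ∈ U then ⟨p.1.1 - p.2 • w, h⟩ else u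
    have hΦ : ∀ v ∈ Metric.ball u δ, ∀ t ∈ Set.Icc (0 : ℝ) δ,
        (Φ (v, t)).1 = v.1 - t • w := fun v hv t ht => by
      simp only [Φ, dif_pos (hdesc v.1 hv t ht).1]
    refine ⟨r, hr0, rfl, δ, hδ, Φ, ?_, fun v hv t ht => ⟨?_, ?_⟩⟩
    · rw [Topology.IsInducing.subtypeVal.continuousOn_iff]
      have hc : Continuous fun p : U × ℝ => p.1.1 - p.2 • w := by fun_prop
      exact hc.continuousOn.congr fun p hp => hΦ p.1 hp.1 p.2 hp.2
    · rw [Subtype.dist_eq, hΦ v hv t ht, dist_eq_norm]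
      rw [sub_sub_cancel_left, norm_neg, norm_smul, Real.norm_eq_abs, abs_of_nonneg ht.1]
      exact mul_le_of_le_one_right ht.1 hw
    · simp only [hΦ v hv t ht]
      exact (hdesc v.1 hv t ht).2
end

section
/- (Quantitative Deformation Lemma.) Let X be a complete metric space, f: X → ℝ a continuous functional, c ∈ ℝ, A a closed subset of X, and δ, σ > 0 such that for every u ∈ X: if c − 2δ ≤ f(u) ≤ c + 2δ and d(u, A) ≤ δ/σ, then |df|(u) > 2σ. Then there exists a continuous map η: X × [0,1] → X such that for every u ∈ X and t ∈ [0,1]: (a) d(η(u,t), u) ≤ (δ/σ)·t; (b) if η(u,t) ≠ u then f(η(u,t)) < f(u); and (c) if u ∈ A and c − δ ≤ f(u) ≤ c + δ, then f(η(u,t)) ≤ f(u) − (f(u) − c + δ)·t. -/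
/-!
The map `η` is obtained by chaining countably many elementary deformations and stopping when `f` has
dropped by a prescribed amount.

* *Elementary deformations.* Put `κ = 2 * σ` and let `Q` be the region given by
  `c - 2 * δ ≤ f u ≤ c + 2 * δ` and `infDist u A ≤ δ / σ`, on which the weak slope exceeds `κ`. The
  balls carrying the local deformations of the definition of the weak slope cover
  `Q`, and M. E. Rudin's form of Stone's construction refines them to countably many families, each
  consisting of pairwise disjoint open sets (`exists_sigma_disjoint_refinement`). The local
  deformations of one family fit together into one map `Φ n : X × ℝ → X`, once their time is cut off
  by a continuous `ρ n` positive exactly on the union of the family: near the boundary of that union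
  `ρ n`, hence the displacement, tends to `0` (`exists_elementary_deformations`).

* *Iteration.* Given `u` and a target level `g`, apply the `Φ n` successively, each index occurring
  infinitely often, for the time `(f x - g) / κ` at the current point `x`. The quantity
  `S = max 0 ((f x - g) / κ)` decreases by at least the length of each step, so the points converge,
  and the tail of the path after step `n` is no longer than `S n`. If the limit `L` had `f L > g`,
  then the time spent at step `n` would tend to `0` while `S n` does not, so `ρ n` would vanish at
  `L` for all `n`, that is, `L` would not be in `Q`. When `f L ≤ g`, the tails are small uniformly
  near the starting data, which gives continuity there (`exists_limit_deformation`).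

* *Choice of the level.* Take `g = f u - 2 * σ * b u t`, where `b` is continuous, vanishes outside
  a suitable neighbourhood of `A`, and is so small that a limit `L` with `f L > g` would lie in `Q`.
-/

open Filter Set Metric

/-- A sequence whose steps are bounded by the decrements of a nonnegative sequence `S` converges, and
its distance to the limit is bounded by `S`. -/
lemma exists_tendsto_of_dist_le_sub {X : Type*} [MetricSpace X] [CompleteSpace X]
    (x : ℕ → X) (S : ℕ → ℝ) (hS : ∀ n, 0 ≤ S n)
    (h : ∀ n, dist (x n) (x (n + 1)) ≤ S n - S (n + 1)) :
    ∃ L, Tendsto x atTop (nhds L) ∧ ∀ n, dist (x n) L ≤ S n := by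
  have hd : ∀ n k, dist (x n) (x (n + k)) ≤ S n - S (n + k) := by
    intro n k
    induction k with
    | zero => simp
    | succ k ih =>
      have h1 := dist_triangle (x n) (x (n + k)) (x (n + k + 1))
      have h2 := h (n + k)
      have e : n + (k + 1) = n + k + 1 := by ring
      rw [e]
      linarith
  have hanti : Antitone S :=
    antitone_nat_of_succ_le fun n => by linarith [h n, dist_nonneg (x := x n) (y := x (n + 1))]
  have hbdd : BddBelow (range S) := ⟨0, by rintro _ ⟨n, rfl⟩; exact hS n⟩
  have hlim := tendsto_atTop_ciInf hanti hbdd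
  have hc : CauchySeq x := by
    refine cauchySeq_of_le_tendsto_0' (fun n => S n - ⨅ i, S i) ?_ ?_
    · intro n m hnm
      obtain ⟨k, rfl⟩ := Nat.exists_eq_add_of_le hnm
      linarith [hd n k, ciInf_le hbdd (n + k)]
    · simpa using hlim.sub_const (⨅ i, S i)
  obtain ⟨L, hL⟩ := cauchySeq_tendsto_of_complete hc
  refine ⟨L, hL, fun n => ?_⟩
  refine le_of_tendsto (tendsto_const_nhds.dist hL) ?_
  filter_upwards [eventually_ge_atTop n] with m hm
  obtain ⟨k, rfl⟩ := Nat.exists_eq_add_of_le hm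
  linarith [hd n k, hS (n + k)]

/-- A family of open sets `B i` refines to countably many families of pairwise disjoint open
sets. The `n`-th family only involves indices with `1 / (n + 1) ≤ r i`, which gives it a lower bound
on the sizes `r i`. -/
lemma exists_sigma_disjoint_refinement {X ι : Type*} [PseudoMetricSpace X]
    (B : ι → Set X) (hB : ∀ i, IsOpen (B i)) (r : ι → ℝ) (hr : ∀ i, 0 < r i) :
    ∃ V : ℕ → ι → Set X, (∀ n i, IsOpen (V n i)) ∧ (∀ n i, V n i ⊆ B i) ∧
      (∀ n i j x, x ∈ V n i → x ∈ V n j → i = j) ∧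
      (∀ n i x, x ∈ V n i → 1 / ((n : ℝ) + 1) ≤ r i) ∧
      ∀ i, ∀ x ∈ B i, ∃ n j, x ∈ V n j := by
  -- `x` is a centre for `i` if `i` is the first index with `x ∈ B i` and `B i` contains a ball of
  -- radius `3 / (n + 1)` about `x`; centres for different indices are `3 / (n + 1)` apart.
  let C : ℕ → ι → Set X := fun n i => {x | (∀ j, WellOrderingRel j i → x ∉ B j) ∧
    ball x (3 * (1 / ((n : ℝ) + 1))) ⊆ B i ∧ 1 / ((n : ℝ) + 1) ≤ r i}
  have hpos : ∀ n : ℕ, 0 < 1 / ((n : ℝ) + 1) := fun n => Nat.one_div_pos_of_nat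
  refine ⟨fun n i => ⋃ x ∈ C n i, ball x (1 / ((n : ℝ) + 1)), ?_, ?_, ?_, ?_, ?_⟩
  · exact fun n i => isOpen_biUnion fun x _ => isOpen_ball
  · intro n i
    refine iUnion₂_subset fun x hx => (ball_subset_ball ?_).trans hx.2.1
    linarith [hpos n]
  · have key : ∀ n i j x, WellOrderingRel i j → x ∈ (⋃ y ∈ C n i, ball y (1 / ((n : ℝ) + 1))) →
        x ∈ (⋃ y ∈ C n j, ball y (1 / ((n : ℝ) + 1))) → False := by
      intro n i j x hij hi hj
      simp only [mem_iUnion, exists_prop, mem_ball] at hi hj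
      obtain ⟨y, hy, hxy⟩ := hi
      obtain ⟨z, hz, hxz⟩ := hj
      refine hz.1 i hij (hy.2.1 ?_)
      rw [mem_ball]
      have := dist_triangle z x y
      rw [dist_comm z x] at this
      linarith [hpos n]
    intro n i j x hi hj
    rcases trichotomous_of WellOrderingRel i j with h | h | h
    · exact (key n i j x h hi hj).elim
    · exact h
    · exact (key n j i x h hj hi).elim
  · intro n i x hx
    simp only [mem_iUnion, exists_prop] at hx
    obtain ⟨y, hy, _⟩ := hx
    exact hy.2.2
  · intro i x hx
    obtain ⟨j, hj, hmin⟩ := WellFounded.has_min (IsWellFounded.wf (r := WellOrderingRel (α := ι)))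
      {i | x ∈ B i} ⟨i, hx⟩
    obtain ⟨ε, hε, hball⟩ := Metric.isOpen_iff.1 (hB j) x hj
    obtain ⟨n, hn⟩ := exists_nat_one_div_lt (lt_min (div_pos hε three_pos) (hr j))
    refine ⟨n, j, mem_iUnion₂.2 ⟨x, ⟨fun k hk hxk => hmin k hxk hk, ?_, ?_⟩, mem_ball_self (hpos n)⟩⟩
    · refine (ball_subset_ball ?_).trans hball
      linarith [min_le_left (ε / 3) (r j)]
    · exact hn.le.trans (min_le_right _ _)

/-- The distance to the complement of `W`, truncated at `ε`; the extended distance makes the case of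
an empty complement harmless. -/
lemma exists_continuous_pos_iff_mem {X : Type*} [PseudoMetricSpace X] (W : Set X) (hW : IsOpen W)
    (ε : ℝ) (hε : 0 < ε) :
    ∃ ρ : X → ℝ, Continuous ρ ∧ (∀ v, 0 ≤ ρ v) ∧ (∀ v, ρ v ≤ ε) ∧ ∀ v, 0 < ρ v ↔ v ∈ W := by
  have hne : ∀ v, min (ENNReal.ofReal ε) (infEDist v Wᶜ) ≠ ⊤ := fun v =>
    ((min_le_left _ _).trans_lt ENNReal.ofReal_lt_top).ne
  refine ⟨fun v => (min (ENNReal.ofReal ε) (infEDist v Wᶜ)).toReal, ?_, ?_, ?_, ?_⟩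
  · refine continuous_iff_continuousAt.2 fun v => ?_
    exact (ENNReal.tendsto_toReal (hne v)).comp
      (continuous_const.min continuous_infEDist).continuousAt
  · exact fun v => ENNReal.toReal_nonneg
  · intro v
    exact ENNReal.toReal_le_of_le_ofReal hε.le (min_le_left _ _)
  · intro v
    rw [ENNReal.toReal_pos_iff]
    have h0 : v ∈ Wᶜ ↔ infEDist v Wᶜ = 0 := mem_iff_infEDist_zero_of_closed hW.isClosed_compl
    constructor
    · intro h
      by_contra hv
      have := h0.1 hv
      simp [this] at h
    · intro h
      refine ⟨lt_min (ENNReal.ofReal_pos.2 hε) ?_, (hne v).lt_top⟩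
      exact pos_iff_ne_zero.2 fun hz => h0.2 hz h

/-- If every point of `P` carries a local deformation decreasing `f` at rate `κ`, then countably many
globally defined continuous maps `Φ n` decrease `f` at rate `κ` during the time
`max 0 (min s (ρ n v))`, and every point of `P` is moved by one of them. -/
lemma exists_elementary_deformations {X : Type*} [MetricSpace X] (f : X → ℝ) (κ : ℝ) (P : Set X)
    (hP : ∀ u ∈ P, ∃ r : ℝ, 0 < r ∧ ∃ H : X × ℝ → X,
      ContinuousOn H (ball u r ×ˢ Icc 0 r) ∧
      ∀ v ∈ ball u r, ∀ t ∈ Icc (0 : ℝ) r, dist (H (v, t)) v ≤ t ∧ f (H (v, t)) ≤ f v - κ * t) :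
    ∃ (Φ : ℕ → X × ℝ → X) (ρ : ℕ → X → ℝ), (∀ n, Continuous (Φ n)) ∧ (∀ n, Continuous (ρ n)) ∧
      (∀ n v s, dist (Φ n (v, s)) v ≤ max 0 (min s (ρ n v)) ∧
        f (Φ n (v, s)) ≤ f v - κ * max 0 (min s (ρ n v))) ∧
      ∀ u ∈ P, ∃ n, 0 < ρ n u := by
  classical
  have hP' : ∀ u : P, ∃ r : ℝ, 0 < r ∧ ∃ H : X × ℝ → X,
      ContinuousOn H (ball (u : X) r ×ˢ Icc 0 r) ∧
      ∀ v ∈ ball (u : X) r, ∀ t ∈ Icc (0 : ℝ) r,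
        dist (H (v, t)) v ≤ t ∧ f (H (v, t)) ≤ f v - κ * t := fun u => hP u u.2
  choose r hr H hHc hH using hP'
  obtain ⟨V, hVo, hVB, hVd, hVr, hVc⟩ := exists_sigma_disjoint_refinement
    (fun u : P => ball (u : X) (r u)) (fun _ => isOpen_ball) r hr
  have hρ := fun n : ℕ => exists_continuous_pos_iff_mem (⋃ u, V n u)
    (isOpen_iUnion (hVo n)) (1 / ((n : ℝ) + 1)) Nat.one_div_pos_of_nat
  choose ρ hρc hρ0 hρε hρW using hρ
  let Φ : ℕ → X × ℝ → X := fun n p =>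
    if h : ∃ u, p.1 ∈ V n u then H h.choose (p.1, max 0 (min p.2 (ρ n p.1))) else p.1
  have hΦV : ∀ n u p, p.1 ∈ V n u → Φ n p = H u (p.1, max 0 (min p.2 (ρ n p.1))) := by
    intro n u p hp
    have h : ∃ u, p.1 ∈ V n u := ⟨u, hp⟩
    have he : h.choose = u := hVd n _ _ _ h.choose_spec hp
    simp only [Φ, dif_pos h, he]
  have hΦN : ∀ n p, (¬ ∃ u, p.1 ∈ V n u) → Φ n p = p.1 := by
    intro n p hp
    simp only [Φ, dif_neg hp]
  have hρN : ∀ n v, (¬ ∃ u, v ∈ V n u) → ρ n v = 0 := by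
    intro n v hv
    refine le_antisymm (not_lt.1 fun h => hv ?_) (hρ0 n v)
    simpa using (hρW n v).1 h
  have htime : ∀ n u v s, v ∈ V n u → max 0 (min s (ρ n v)) ∈ Icc (0 : ℝ) (r u) := by
    intro n u v s hv
    refine ⟨le_max_left _ _, max_le (hr u).le ((min_le_right _ _).trans ?_)⟩
    exact (hρε n v).trans (hVr n u v hv)
  have hest : ∀ n v s, dist (Φ n (v, s)) v ≤ max 0 (min s (ρ n v)) ∧
      f (Φ n (v, s)) ≤ f v - κ * max 0 (min s (ρ n v)) := by
    intro n v s
    by_cases h : ∃ u, v ∈ V n u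
    · obtain ⟨u, hu⟩ := h
      rw [hΦV n u (v, s) hu]
      exact hH u v (hVB n u hu) _ (htime n u v s hu)
    · rw [hΦN n (v, s) h, hρN n v h]
      simp
  refine ⟨Φ, ρ, fun n => ?_, hρc, hest, ?_⟩
  · have hm : Continuous fun p : X × ℝ => max 0 (min p.2 (ρ n p.1)) :=
      continuous_const.max (continuous_snd.min ((hρc n).comp continuous_fst))
    refine continuous_iff_continuousAt.2 fun p => ?_
    by_cases h : ∃ u, p.1 ∈ V n u
    · obtain ⟨u, hu⟩ := h
      have hopen : IsOpen {q : X × ℝ | q.1 ∈ V n u} := (hVo n u).preimage continuous_fst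
      have hco : ContinuousOn (fun q : X × ℝ => H u (q.1, max 0 (min q.2 (ρ n q.1))))
          {q : X × ℝ | q.1 ∈ V n u} :=
        (hHc u).comp (continuous_fst.prodMk hm).continuousOn
          fun q hq => ⟨hVB n u hq, htime n u q.1 q.2 hq⟩
      refine ((hco.congr fun q hq => hΦV n u q hq).continuousAt (hopen.mem_nhds hu))
    · -- The displacement is at most the cut-off time, which is continuous and vanishes at `p`.
      have h0 : Tendsto (fun q : X × ℝ => dist (Φ n q) q.1) (nhds p) (nhds 0) := by
        refine squeeze_zero (fun _ => dist_nonneg) (fun q => (hest n q.1 q.2).1) ?_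
        have := hm.tendsto p
        simpa [hρN n p.1 h] using this
      have h1 : Tendsto (fun q : X × ℝ => q.1) (nhds p) (nhds p.1) := continuous_fst.tendsto p
      rw [ContinuousAt, hΦN n p h]
      rw [tendsto_iff_dist_tendsto_zero] at h1 ⊢
      refine squeeze_zero (fun _ => dist_nonneg) (fun q => dist_triangle _ q.1 _) ?_
      simpa using h0.add h1
  · intro u hu
    obtain ⟨n, j, hj⟩ := hVc ⟨u, hu⟩ u (mem_ball_self (hr _))
    exact ⟨n, (hρW n u).2 (mem_iUnion.2 ⟨j, hj⟩)⟩

/-- Successive application of the deformations `Φ n` to the first component of `p = (u, g)`, the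
time allotted at a point `x` being `(f x - g) / κ`. The index at step `n` is the first component
of `Nat.unpair n`, so that every index recurs infinitely often. -/
noncomputable def deformationIterate {X : Type*} (f : X → ℝ) (κ : ℝ) (Φ : ℕ → X × ℝ → X) :
    ℕ → X × ℝ → X
  | 0, p => p.1
  | n + 1, p => Φ (Nat.unpair n).1
      (deformationIterate f κ Φ n p, (f (deformationIterate f κ Φ n p) - p.2) / κ)

/-- There is a map `L` such that `L (u, g)` lies at distance at most `(f u - g)⁺ / κ` from `u`, with
`f` dropping by at least `κ` times that distance; it satisfies
`f (L (u, g)) ≤ g` unless `L (u, g) ∉ P`, and is continuous wherever this inequality holds. -/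
lemma exists_limit_deformation {X : Type*} [MetricSpace X] [CompleteSpace X] (f : X → ℝ)
    (hf : Continuous f) (κ : ℝ) (hκ : 0 < κ) (P : Set X)
    (hP : ∀ u ∈ P, ∃ r : ℝ, 0 < r ∧ ∃ H : X × ℝ → X,
      ContinuousOn H (ball u r ×ˢ Icc 0 r) ∧
      ∀ v ∈ ball u r, ∀ t ∈ Icc (0 : ℝ) r, dist (H (v, t)) v ≤ t ∧ f (H (v, t)) ≤ f v - κ * t) :
    ∃ L : X × ℝ → X, (∀ p, dist (L p) p.1 ≤ max 0 ((f p.1 - p.2) / κ)) ∧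
      (∀ p, f (L p) ≤ f p.1 - κ * dist (L p) p.1) ∧
      (∀ p, L p ∈ P → f (L p) ≤ p.2) ∧
      ∀ p, f (L p) ≤ p.2 → ContinuousAt L p := by
  obtain ⟨Φ, ρ, hΦc, hρc, hΦ, hρP⟩ := exists_elementary_deformations f κ P hP
  set U := deformationIterate f κ Φ with hU
  have hUc : ∀ n, Continuous (U n) := by
    intro n
    induction n with
    | zero => exact continuous_fst
    | succ n ih =>
      exact (hΦc _).comp (ih.prodMk (((hf.comp ih).sub continuous_snd).div_const κ))
  let S : ℕ → X × ℝ → ℝ := fun n p => max 0 ((f (U n p) - p.2) / κ)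
  let m : ℕ → X × ℝ → ℝ := fun n p =>
    max 0 (min ((f (U n p) - p.2) / κ) (ρ (Nat.unpair n).1 (U n p)))
  have hSc : ∀ n, Continuous (S n) := fun n =>
    continuous_const.max (((hf.comp (hUc n)).sub continuous_snd).div_const κ)
  have hS0 : ∀ n p, 0 ≤ S n p := fun n p => le_max_left _ _
  have hd : ∀ n p, dist (U (n + 1) p) (U n p) ≤ m n p := fun n p => (hΦ _ _ _).1
  have hfd : ∀ n p, f (U (n + 1) p) ≤ f (U n p) - κ * m n p := fun n p => (hΦ _ _ _).2
  have hm0 : ∀ n p, 0 ≤ m n p := fun n p => le_max_left _ _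
  have hmS : ∀ n p, m n p ≤ S n p - S (n + 1) p := by
    intro n p
    have h1 : m n p ≤ S n p := max_le_max le_rfl (min_le_left _ _)
    have h2 : (f (U (n + 1) p) - p.2) / κ ≤ (f (U n p) - p.2) / κ - m n p := by
      rw [div_le_iff₀ hκ, sub_mul, div_mul_cancel₀ _ hκ.ne']
      linarith [hfd n p]
    have h3 : (f (U n p) - p.2) / κ ≤ S n p := le_max_right _ _
    have h4 : S (n + 1) p ≤ S n p - m n p := max_le (by linarith) (by linarith)
    linarith
  have hlim : ∀ p, ∃ L, Tendsto (fun n => U n p) atTop (nhds L) ∧ ∀ n, dist (U n p) L ≤ S n p := by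
    intro p
    refine exists_tendsto_of_dist_le_sub _ (fun n => S n p) (fun n => hS0 n p) fun n => ?_
    rw [dist_comm]
    exact (hd n p).trans (hmS n p)
  choose L hL hLS using hlim
  have hSL : ∀ p, Tendsto (fun n => S n p) atTop (nhds (max 0 ((f (L p) - p.2) / κ))) := by
    intro p
    exact tendsto_const_nhds.max ((((hf.tendsto _).comp (hL p)).sub_const _).div_const κ)
  refine ⟨L, ?_, ?_, ?_, ?_⟩
  · intro p
    rw [dist_comm]
    exact hLS p 0
  · intro p
    have h : ∀ n, f (U n p) ≤ f p.1 - κ * dist (U n p) p.1 := by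
      intro n
      induction n with
      | zero => simp [hU, deformationIterate]
      | succ n ih =>
        have h1 := dist_triangle (U (n + 1) p) (U n p) p.1
        have h2 := mul_le_mul_of_nonneg_left (h1.trans (add_le_add_left (hd n p) _)) hκ.le
        linarith [hfd n p]
    exact le_of_tendsto_of_tendsto' ((hf.tendsto _).comp (hL p))
      ((((hL p).dist tendsto_const_nhds).const_mul κ).const_sub _) h
  · intro p hLP
    by_contra! hlt
    obtain ⟨k, hk⟩ := hρP _ hLP
    have hm : Tendsto (fun n => m n p) atTop (nhds 0) := by
      refine squeeze_zero (fun n => hm0 n p) (fun n => hmS n p) ?_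
      simpa using (hSL p).sub ((tendsto_add_atTop_iff_nat 1).2 (hSL p))
    -- Along the steps `Nat.pair k j`, at which `Φ k` is applied, the time has a positive limit.
    have hsub : Tendsto (fun j => Nat.pair k j) atTop atTop :=
      tendsto_atTop_mono (fun j => Nat.right_le_pair k j) tendsto_id
    have hUk := (hL p).comp hsub
    have h1 : Tendsto (fun j => m (Nat.pair k j) p) atTop
        (nhds (max 0 (min ((f (L p) - p.2) / κ) (ρ k (L p))))) := by
      simp only [m, Nat.unpair_pair]
      exact tendsto_const_nhds.max (((((hf.tendsto _).comp hUk).sub_const _).div_const κ).min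
        (((hρc k).tendsto _).comp hUk))
    have h2 := tendsto_nhds_unique h1 (hm.comp hsub)
    have h3 : 0 < min ((f (L p) - p.2) / κ) (ρ k (L p)) :=
      lt_min (div_pos (by linarith) hκ) hk
    have h4 := le_max_right 0 (min ((f (L p) - p.2) / κ) (ρ k (L p)))
    linarith
  · intro p hp
    rw [Metric.continuousAt_iff']
    intro ε hε
    have h0 : Tendsto (fun n => S n p) atTop (nhds 0) := by
      have h := hSL p
      rwa [max_eq_left (div_nonpos_of_nonpos_of_nonneg (by linarith) hκ.le)] at h
    obtain ⟨n, hn⟩ := (h0.eventually_lt_const (show 0 < ε / 3 by linarith)).exists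
    filter_upwards [(hSc n).continuousAt.eventually_lt_const hn,
      Metric.continuousAt_iff'.1 (hUc n).continuousAt (ε / 3) (by linarith)] with q hq1 hq2
    have h1 := dist_triangle4 (L q) (U n q) (U n p) (L p)
    have h2 := hLS q n
    rw [dist_comm] at h2
    linarith [hLS p n]

/-- **Quantitative Deformation Lemma.** Let `X` be a complete metric space, `f : X → ℝ`
continuous, `c ∈ ℝ`, `A ⊆ X` closed and `δ, σ > 0` such that every `u` with
`c - 2δ ≤ f(u) ≤ c + 2δ` and `d(u,A) ≤ δ/σ` satisfies `|df|(u) > 2σ`. Then there is a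
continuous map `η : X × [0,1] → X` with: `d(η(u,t),u) ≤ (δ/σ)t`; `η(u,t) ≠ u` implies
`f(η(u,t)) < f(u)`; and `u ∈ A`, `c - δ ≤ f(u) ≤ c + δ` imply
`f(η(u,t)) ≤ f(u) - (f(u) - c + δ)t`. -/
theorem quantitative_deformation_lemma {X : Type*} [MetricSpace X] [CompleteSpace X]
    (f : X → ℝ) (hf : Continuous f)
    (c : ℝ) (A : Set X) (hA : IsClosed A)
    (δ σ : ℝ) (hδ : 0 < δ) (hσ : 0 < σ)
    (hyp : ∀ u : X, c - 2 * δ ≤ f u → f u ≤ c + 2 * δ → Metric.infDist u A ≤ δ / σ →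
      ENNReal.ofReal (2 * σ) < weakSlope f u) :
    ∃ η : X → ℝ → X,
      ContinuousOn (fun p : X × ℝ => η p.1 p.2) ((Set.univ : Set X) ×ˢ Set.Icc 0 1) ∧
      ∀ u : X, ∀ t ∈ Set.Icc (0:ℝ) 1,
        dist (η u t) u ≤ (δ / σ) * t ∧
        (η u t ≠ u → f (η u t) < f u) ∧
        (u ∈ A → c - δ ≤ f u → f u ≤ c + δ →
          f (η u t) ≤ f u - (f u - c + δ) * t) := by
  have hslope : ∀ u ∈ {u : X | c - 2 * δ ≤ f u ∧ f u ≤ c + 2 * δ ∧ infDist u A ≤ δ / σ},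
      ∃ r : ℝ, 0 < r ∧ ∃ H : X × ℝ → X, ContinuousOn H (ball u r ×ˢ Icc 0 r) ∧
      ∀ v ∈ ball u r, ∀ t ∈ Icc (0 : ℝ) r,
        dist (H (v, t)) v ≤ t ∧ f (H (v, t)) ≤ f v - (2 * σ) * t := by
    rintro u ⟨h1, h2, h3⟩
    obtain ⟨_, ⟨s, hs0, rfl, r, hr, H, hHc, hH⟩, hlt⟩ := lt_sSup_iff.1 (hyp u h1 h2 h3)
    have hs : 2 * σ < s := (ENNReal.ofReal_lt_ofReal_iff_of_nonneg (by positivity)).1 hlt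
    refine ⟨r, hr, H, hHc, fun v hv t ht => ⟨(hH v hv t ht).1, (hH v hv t ht).2.trans ?_⟩⟩
    linarith [mul_le_mul_of_nonneg_right hs.le ht.1]
  obtain ⟨L, hLd, hLf, hLP, hLc⟩ :=
    exists_limit_deformation f hf (2 * σ) (by positivity) _ hslope
  -- The first term of the minimum keeps the level above `c - δ`, the second bounds the length of the
  -- path, and the third switches the deformation off above the level `c + 2 * δ`.
  let w : X → ℝ := fun u =>
    min ((f u - c + δ) / (2 * σ)) (min (δ / σ) ((c + 2 * δ - f u) / σ))
  let b : X → ℝ → ℝ := fun u t => max 0 (w u * t - infDist u A)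
  have hwc : Continuous w :=
    (((hf.sub continuous_const).add continuous_const).div_const _).min
      (continuous_const.min ((continuous_const.sub hf).div_const _))
  have hbc : Continuous fun p : X × ℝ => b p.1 p.2 :=
    continuous_const.max (((hwc.comp continuous_fst).mul continuous_snd).sub
      ((continuous_infDist_pt A).comp continuous_fst))
  have hb0 : ∀ u t, 0 ≤ b u t := fun u t => le_max_left _ _
  let g : X × ℝ → X × ℝ := fun p => (p.1, f p.1 - 2 * σ * b p.1 p.2)
  have hgc : Continuous g :=
    continuous_fst.prodMk ((hf.comp continuous_fst).sub (continuous_const.mul hbc))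
  have hdist : ∀ u t, dist (L (g (u, t))) u ≤ b u t := by
    intro u t
    have h := hLd (g (u, t))
    have e : (f (g (u, t)).1 - (g (u, t)).2) / (2 * σ) = b u t := by
      simp only [g]
      field_simp
      ring
    rwa [e, max_eq_right (hb0 u t)] at h
  have hdec : ∀ u t, f (L (g (u, t))) ≤ f u - 2 * σ * dist (L (g (u, t))) u :=
    fun u t => hLf (g (u, t))
  have hbt : ∀ u, ∀ t ∈ Icc (0 : ℝ) 1, b u t ≤ δ / σ * t := by
    intro u t ht
    have h1 : w u ≤ δ / σ := (min_le_right _ _).trans (min_le_left _ _)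
    have h2 := mul_le_mul_of_nonneg_right h1 ht.1
    exact max_le (mul_nonneg (by positivity) ht.1) (by linarith [infDist_nonneg (x := u) (s := A)])
  have hlevel : ∀ u, ∀ t ∈ Icc (0 : ℝ) 1, f (L (g (u, t))) ≤ f u - 2 * σ * b u t := by
    intro u t ht
    by_contra! hlt
    have hd := hdist u t
    have hfu : f (L (g (u, t))) ≤ f u := by
      have := hdec u t
      have : 0 ≤ 2 * σ * dist (L (g (u, t))) u := by positivity
      linarith
    have hbpos : 0 < b u t := by
      by_contra! h
      have : b u t = 0 := le_antisymm h (hb0 u t)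
      rw [this] at hlt
      linarith
    have hwt : 0 < w u * t - infDist u A := by
      by_contra! h
      exact hbpos.ne' (max_eq_left h)
    have hbe : b u t = w u * t - infDist u A := max_eq_right hwt.le
    have hiA := infDist_nonneg (x := u) (s := A)
    have hw : 0 < w u := pos_of_mul_pos_left (by linarith : 0 < w u * t) ht.1
    have hwt1 : w u * t ≤ w u := mul_le_of_le_one_right hw.le ht.2
    have hw1 : w u ≤ (f u - c + δ) / (2 * σ) := min_le_left _ _
    have hw2 : w u ≤ δ / σ := (min_le_right _ _).trans (min_le_left _ _)
    have hw3 : w u ≤ (c + 2 * δ - f u) / σ := (min_le_right _ _).trans (min_le_right _ _)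
    rw [le_div_iff₀ (by positivity)] at hw1
    rw [le_div_iff₀ hσ] at hw3
    have hb1 : 2 * σ * b u t ≤ 2 * σ * w u :=
      mul_le_mul_of_nonneg_left (by linarith) (by positivity)
    have hw3' : 0 < w u * σ := mul_pos hw hσ
    refine absurd (hLP (g (u, t)) ⟨?_, ?_, ?_⟩) (not_le.2 hlt)
    · linarith
    · linarith
    · have h := infDist_le_infDist_add_dist (s := A) (x := L (g (u, t))) (y := u)
      linarith
  refine ⟨fun u t => L (g (u, t)), ?_, fun u t ht => ⟨?_, ?_, ?_⟩⟩
  · rintro ⟨u, t⟩ ⟨_, ht⟩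
    have h : ContinuousAt L (g (u, t)) := hLc _ (hlevel u t ht)
    exact (ContinuousAt.comp (f := g) (x := (u, t)) h hgc.continuousAt).continuousWithinAt
  · exact (hdist u t).trans (hbt u t ht)
  · intro hne
    have : 0 < 2 * σ * dist (L (g (u, t))) u := mul_pos (by positivity) (dist_pos.2 hne)
    linarith [hdec u t]
  · intro huA h1 h2
    have hw : w u = (f u - c + δ) / (2 * σ) := by
      have h3 : (f u - c + δ) / (2 * σ) ≤ δ / σ := by
        rw [div_le_div_iff₀ (by positivity) hσ]
        nlinarith
      refine min_eq_left (le_min h3 (h3.trans ?_))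
      gcongr
      linarith
    have hb : (f u - c + δ) / (2 * σ) * t ≤ b u t := by
      have : w u * t - infDist u A ≤ b u t := le_max_right _ _
      rwa [infDist_zero_of_mem huA, hw, sub_zero] at this
    have h4 := mul_le_mul_of_nonneg_left hb (by positivity : 0 ≤ 2 * σ)
    have e : 2 * σ * ((f u - c + δ) / (2 * σ) * t) = (f u - c + δ) * t := by
      field_simp
    linarith [hlevel u t ht]
end

section
/- (Symmetric approximation of curves.) In the abstract symmetrization framework, let M be a closed subset of 𝔻 disjoint from 𝕊, let γ ∈ C(𝔻, X) with γ(𝔻) ⊆ S, let H_0 ∈ H_*, and let δ > 0. Then there exists a continuous curve γ̃ ∈ C(𝔻, X) with γ̃(𝔻) ⊆ S such that: (a) ‖γ̃(τ) − γ(τ)*‖_V ≤ δ for all τ ∈ M; (b) for every τ ∈ 𝔻 there exist k ∈ ℕ and polarizers H_1, …, H_k ∈ H_* such that γ̃(τ) = γ(τ)^{H_0 H_1 ⋯ H_k} (i.e. γ̃(τ) is obtained from γ(τ) by finitely many successive polarizations, the first being by H_0); and (c) γ̃(τ) = γ(τ)^{H_0} for all τ ∈ 𝕊. -/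
/-!
Choose for each `k` a path `p k` in the space of polarizers from `H₀` to the `k`-th term `h_k` of the
approximating sequence, and a Urysohn function `φ` that is `0` on `𝕊` and `1` on `M`. The curve is
`γ̃(τ) = γ(τ)^{H₀ p₀(φ(τ)) ⋯ p_{n-1}(φ(τ))}` with `n` large. It is continuous because the polarization
is jointly continuous. On `𝕊` every polarizer is `H₀`, so idempotence leaves `γ(τ)^{H₀}`. On `M` it is
the `n`-th iterate of `γ(τ)^{H₀}` along `(h_k)`, which converges in `V` to
`(γ(τ)^{H₀})* = γ(τ)*`. One `n` serves for all `τ ∈ M`: the iterates are nonexpansive in `V`, so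
pointwise convergence is uniform on the compact set `M` (`eventually_forall_norm_polIter_le`).
-/

open Filter Set Metric

section

variable {X V H : Type*} [NormedAddCommGroup X] [NormedSpace ℝ X]
  [NormedAddCommGroup V] [NormedSpace ℝ V] [TopologicalSpace H] [PathConnectedSpace H]
  (F : SymmFramework X V H)

lemma polIter_mem (h : ℕ → H) {u : X} (hu : u ∈ F.S) (n : ℕ) : polIter F.pol h u n ∈ F.S := by
  induction n with
  | zero => exact hu
  | succ n ih => exact F.pol_mem _ ih _

lemma polIter_nonexpansive (h : ℕ → H) {u v : X} (hu : u ∈ F.S) (hv : v ∈ F.S) (n : ℕ) :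
    ‖F.ι (polIter F.pol h u n) - F.ι (polIter F.pol h v n)‖ ≤ ‖F.ι u - F.ι v‖ := by
  induction n with
  | zero => exact le_rfl
  | succ n ih =>
    exact (F.pol_nonexpansive _ (polIter_mem F h hu n) _ (polIter_mem F h hv n) _).trans ih

/-- The symmetrization inherits nonexpansiveness from the polarizations approximating it. -/
lemma symm_nonexpansive {u v : X} (hu : u ∈ F.S) (hv : v ∈ F.S) :
    ‖F.ι (F.symm u) - F.ι (F.symm v)‖ ≤ ‖F.ι u - F.ι v‖ := by
  obtain ⟨h, hh⟩ := F.polar_approx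
  exact le_of_tendsto ((hh u hu).sub (hh v hv)).norm
    (Eventually.of_forall fun n => polIter_nonexpansive F h hu hv n)

lemma polIter_eq_foldl (h : ℕ → H) (u : X) (n : ℕ) :
    polIter F.pol h u n = List.foldl F.pol u ((List.range n).map h) := by
  induction n with
  | zero => rfl
  | succ n ih => simp [polIter, List.range_succ, ih]

lemma polIter_const (h0 : H) {u : X} (hu : u ∈ F.S) (n : ℕ) :
    polIter F.pol (fun _ => h0) (F.pol u h0) n = F.pol u h0 := by
  induction n with
  | zero => rfl
  | succ n ih => rw [polIter, ih, F.pol_idem u hu]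

lemma continuousOn_polIter {T : Type*} [TopologicalSpace T] {s : Set T} {h : T → ℕ → H}
    (hh : ∀ k, ContinuousOn (fun t => h t k) s) {c : T → X} (hc : ContinuousOn c s)
    (hcS : ∀ t ∈ s, c t ∈ F.S) (n : ℕ) :
    ContinuousOn (fun t => polIter F.pol (h t) (c t) n) s := by
  induction n with
  | zero => exact hc
  | succ n ih =>
    exact F.pol_cont.comp (ih.prodMk (hh n))
      fun t ht => ⟨polIter_mem F _ (hcS t ht) n, mem_univ _⟩

/-- Convergence of the iterated polarizations is uniform along a continuous curve over a compact
set: both the iterates and their limit are nonexpansive, so an `n` good at one point is good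
nearby. -/
lemma eventually_forall_norm_polIter_le {T : Type*} [TopologicalSpace T] {K : Set T}
    (hK : IsCompact K) {c : T → X} (hc : ContinuousOn c K) (hcS : ∀ t ∈ K, c t ∈ F.S)
    {h : ℕ → H} (hh : ∀ u ∈ F.S,
      Tendsto (fun n => F.ι (polIter F.pol h u n)) atTop (nhds (F.ι (F.symm u))))
    {δ : ℝ} (hδ : 0 < δ) :
    ∀ᶠ n in atTop, ∀ t ∈ K, ‖F.ι (polIter F.pol h (c t) n) - F.ι (F.symm (c t))‖ ≤ δ := by
  suffices ∀ᶠ n in atTop, ∀ t ∈ K, t ∈ K →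
      ‖F.ι (polIter F.pol h (c t) n) - F.ι (F.symm (c t))‖ ≤ δ from
    this.mono fun n hn t ht => hn t ht ht
  refine hK.induction_on (p := fun s => ∀ᶠ n in atTop, ∀ t ∈ s, t ∈ K →
      ‖F.ι (polIter F.pol h (c t) n) - F.ι (F.symm (c t))‖ ≤ δ) (by simp)
    (fun s t hst ht => ht.mono fun n hn x hx => hn x (hst hx)) ?_ ?_
  · intro s t hs ht
    filter_upwards [hs, ht] with n h1 h2 x hx
    exact hx.elim (h1 x) (h2 x)
  · intro x hx
    have hcx : ContinuousWithinAt (fun t => F.ι (c t)) K x :=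
      F.ι.continuous.continuousAt.comp_continuousWithinAt (hc x hx)
    refine ⟨_, hcx (Metric.ball_mem_nhds _ (show 0 < δ / 3 by linarith)), ?_⟩
    filter_upwards [hh _ (hcS x hx) (Metric.ball_mem_nhds _ (show 0 < δ / 3 by linarith))]
      with n hn t ht htK
    replace hn : dist (F.ι (polIter F.pol h (c x) n)) (F.ι (F.symm (c x))) < δ / 3 := hn
    replace ht : dist (F.ι (c t)) (F.ι (c x)) < δ / 3 := ht
    have h1 := polIter_nonexpansive F h (hcS t htK) (hcS x hx) n
    have h2 := symm_nonexpansive F (hcS x hx) (hcS t htK)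
    rw [← dist_eq_norm, ← dist_eq_norm] at h1 h2
    rw [dist_comm (F.ι (c x))] at h2
    rw [← dist_eq_norm]
    have := dist_triangle4 (F.ι (polIter F.pol h (c t) n)) (F.ι (polIter F.pol h (c x) n))
      (F.ι (F.symm (c x))) (F.ι (F.symm (c t)))
    linarith

end

/-- **Symmetric approximation of curves.** In the abstract symmetrization framework, let
`M ⊆ 𝔻` be closed and disjoint from `𝕊`, `γ ∈ C(𝔻,X)` with `γ(𝔻) ⊆ S`, `H₀ ∈ H_*` and
`δ > 0`. Then there is `γ̃ ∈ C(𝔻,X)` with values in `S` such that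
(a) `‖γ̃(τ) - γ(τ)*‖_V ≤ δ` on `M`; (b) each `γ̃(τ)` is obtained from `γ(τ)` by finitely
many successive polarizations, the first one by `H₀`; (c) `γ̃(τ) = γ(τ)^{H₀}` on `𝕊`. -/
theorem symmetric_approximation_of_curves
    {X V H : Type*} [NormedAddCommGroup X] [NormedSpace ℝ X] [CompleteSpace X]
    [NormedAddCommGroup V] [NormedSpace ℝ V] [CompleteSpace V]
    [TopologicalSpace H] [PathConnectedSpace H]
    (F : SymmFramework X V H)
    (m : ℕ) (hm : 1 ≤ m)
    (M : Set (EuclideanSpace ℝ (Fin m)))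
    (hMclosed : IsClosed M) (hMsub : M ⊆ mpD m) (hMdisj : Disjoint M (mpS m))
    (γ : EuclideanSpace ℝ (Fin m) → X)
    (hγcont : ContinuousOn γ (mpD m))
    (hγS : ∀ t ∈ mpD m, γ t ∈ F.S)
    (h0 : H) (δ : ℝ) (hδ : 0 < δ) :
    ∃ γt : EuclideanSpace ℝ (Fin m) → X,
      ContinuousOn γt (mpD m) ∧
      (∀ t ∈ mpD m, γt t ∈ F.S) ∧
      -- (a)
      (∀ τ ∈ M, ‖F.ι (γt τ) - F.ι (F.symm (γ τ))‖ ≤ δ) ∧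
      -- (b)
      (∀ τ ∈ mpD m, ∃ l : List H, γt τ = List.foldl F.pol (γ τ) (h0 :: l)) ∧
      -- (c)
      (∀ τ ∈ mpS m, γt τ = F.pol (γ τ) h0) := by
  obtain ⟨h, hh⟩ := F.polar_approx
  have hSD : mpS m ⊆ mpD m := sphere_subset_closedBall
  obtain ⟨φ, hφ0, hφ1, hφI⟩ := exists_continuous_zero_one_of_isClosed
    (show IsClosed (mpS m) from isClosed_sphere) hMclosed hMdisj.symm
  let p : ∀ k, Path h0 (h k) := fun k => PathConnectedSpace.somePath h0 (h k)
  let c : EuclideanSpace ℝ (Fin m) → X := fun τ => F.pol (γ τ) h0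
  let q : EuclideanSpace ℝ (Fin m) → ℕ → H := fun τ k => p k ⟨φ τ, hφI τ⟩
  have hcS : ∀ τ ∈ mpD m, c τ ∈ F.S := fun τ hτ => F.pol_mem _ (hγS τ hτ) _
  have hcc : ContinuousOn c (mpD m) :=
    F.pol_cont.comp (hγcont.prodMk continuousOn_const) fun τ hτ => ⟨hγS τ hτ, mem_univ _⟩
  have hMc : IsCompact M :=
    (isCompact_closedBall (0 : EuclideanSpace ℝ (Fin m)) 1).of_isClosed_subset hMclosed hMsub
  obtain ⟨n, hn⟩ := (eventually_forall_norm_polIter_le F hMc (hcc.mono hMsub)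
    (fun τ hτ => hcS τ (hMsub hτ)) hh hδ).exists
  refine ⟨fun τ => polIter F.pol (q τ) (c τ) n, ?_, ?_, ?_, ?_, ?_⟩
  · exact continuousOn_polIter F (fun k => ((p k).continuous.comp
      (φ.continuous.subtype_mk _)).continuousOn) hcc hcS n
  · exact fun τ hτ => polIter_mem F _ (hcS τ hτ) n
  · intro τ hτ
    have hq : q τ = h := by
      funext k
      have : (⟨φ τ, hφI τ⟩ : unitInterval) = 1 := Subtype.ext (hφ1 hτ)
      simp [q, this]
    have := hn τ hτ
    rw [F.symm_pol _ (hγS τ (hMsub hτ))] at this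
    simpa only [hq] using this
  · exact fun τ _ => ⟨(List.range n).map (q τ), polIter_eq_foldl F _ _ _⟩
  · intro τ hτ
    have hq : q τ = fun _ => h0 := by
      funext k
      have : (⟨φ τ, hφI τ⟩ : unitInterval) = 0 := Subtype.ext (hφ0 hτ)
      simp [q, this]
    simpa only [hq] using polIter_const F h0 (hγS τ (hSD hτ)) n
end

section
/- In the abstract symmetrization framework, if (u_j) ⊂ X is a sequence converging to u in X (with respect to the norm of X) and ‖u_j − u_j*‖_V → 0 as j → ∞, then u = u* (equality in V). -/
/-!
Polarizations are nonexpansive for the norm of `V`, hence so are their iterates and, in the limit,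
the symmetrization on `S` (`SymmFramework.symm_nonexpansive`). Composing with the Lipschitz map
`Θ`, the extended symmetrization is Lipschitz for the norm of `V`
(`SymmFramework.symmX_lipschitz`). Since `X` embeds continuously in `V`, `u_j → u` and
`u_j* → u*` in `V`, so `u - u*` is the limit of `u_j - u_j*`, which is `0`.
-/

open Filter Set Metric

namespace SymmFramework

variable {X V H : Type*} [NormedAddCommGroup X] [NormedSpace ℝ X]
  [NormedAddCommGroup V] [NormedSpace ℝ V] [TopologicalSpace H] [PathConnectedSpace H]
  (F : SymmFramework X V H)

lemma polIter_mem (Hm : ℕ → H) {u : X} (hu : u ∈ F.S) (m : ℕ) :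
    polIter F.pol Hm u m ∈ F.S := by
  induction m with
  | zero => exact hu
  | succ m ih => exact F.pol_mem _ ih _

lemma polIter_nonexpansive (Hm : ℕ → H) {u v : X} (hu : u ∈ F.S) (hv : v ∈ F.S) (m : ℕ) :
    ‖F.ι (polIter F.pol Hm u m) - F.ι (polIter F.pol Hm v m)‖ ≤ ‖F.ι u - F.ι v‖ := by
  induction m with
  | zero => exact le_rfl
  | succ m ih =>
    exact (F.pol_nonexpansive _ (F.polIter_mem Hm hu m) _ (F.polIter_mem Hm hv m) _).trans ih

/-- The bound passes to the limit because a single sequence of polarizers approximates both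
symmetrizations. -/
lemma symm_nonexpansive {u v : X} (hu : u ∈ F.S) (hv : v ∈ F.S) :
    ‖F.ι (F.symm u) - F.ι (F.symm v)‖ ≤ ‖F.ι u - F.ι v‖ := by
  obtain ⟨Hm, h⟩ := F.polar_approx
  exact le_of_tendsto ((h u hu).sub (h v hv)).norm
    (Eventually.of_forall fun m => F.polIter_nonexpansive Hm hu hv m)

lemma symmX_lipschitz (u v : X) :
    ‖F.ι (F.symmX u) - F.ι (F.symmX v)‖ ≤ F.CΘ * ‖F.ι u - F.ι v‖ :=
  (F.symm_nonexpansive (F.Θ_mem u) (F.Θ_mem v)).trans (F.Θ_lip u v)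

end SymmFramework

/-- In the abstract symmetrization framework, if `(u_j) ⊆ X` converges to `u` in `X` and
`‖u_j - u_j*‖_V → 0`, then `u = u*` (equality in `V`). -/
theorem limit_of_almost_symmetric_sequence_is_symmetric
    {X V H : Type*} [NormedAddCommGroup X] [NormedSpace ℝ X] [CompleteSpace X]
    [NormedAddCommGroup V] [NormedSpace ℝ V] [CompleteSpace V]
    [TopologicalSpace H] [PathConnectedSpace H]
    (F : SymmFramework X V H)
    (u : ℕ → X) (x : X)
    (hconv : Filter.Tendsto u Filter.atTop (nhds x))
    (hsymm : Filter.Tendsto (fun j => ‖F.ι (u j) - F.ι (F.symmX (u j))‖)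
      Filter.atTop (nhds 0)) :
    F.ι x = F.ι (F.symmX x) := by
  have hι : Tendsto (fun j => F.ι (u j)) atTop (nhds (F.ι x)) :=
    (F.ι.continuous.tendsto x).comp hconv
  have hbound : Tendsto (fun j => F.CΘ * ‖F.ι (u j) - F.ι x‖) atTop (nhds 0) := by
    simpa using (tendsto_iff_norm_sub_tendsto_zero.1 hι).const_mul F.CΘ
  have hstar : Tendsto (fun j => F.ι (F.symmX (u j))) atTop (nhds (F.ι (F.symmX x))) :=
    tendsto_iff_norm_sub_tendsto_zero.2 <|
      squeeze_zero (fun _ => norm_nonneg _) (fun j => F.symmX_lipschitz (u j) x) hbound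
  have hzero := tendsto_nhds_unique (hι.sub hstar).norm hsymm
  exact sub_eq_zero.1 (norm_eq_zero.1 hzero)
end

section
/- Let Λ ⊂ ℝ be a compact interval and c: Λ → ℝ an arbitrary function. Let D be the set of points λ_0 ∈ Λ for which there exist Q(λ_0) ∈ ℝ and a strictly increasing sequence (λ_h) ⊂ Λ converging to λ_0 such that (c(λ_h) − c(λ_0))/(λ_0 − λ_h) ≤ Q(λ_0) for all h ≥ 1. Then the complement Λ \ D has one-dimensional Lebesgue measure zero; equivalently, the set of λ_0 ∈ Λ at which the left difference quotients of c tend to −∞ (i.e. (c(μ) − c(λ_0))/(μ − λ_0) → −∞ as μ → λ_0 from the left) has Lebesgue measure zero. -/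
open Filter Set

/-!
Call `x` bad if `(c y - c x) / (x - y) → +∞` as `y` increases to `x` inside `[a, b]`; a point outside
`D` is bad. Near a bad point `x`, to its left, `c` exceeds `c x`, so there is a rational `p < x` with
`c x < c y` for all `y ∈ (p, x) ∩ [a, b]`. Let `A p` be the set of bad points which admit a given `p`.
Then `c` is strictly decreasing on `A p`, so by Lebesgue's theorem on monotone functions (valid within
arbitrary subsets of `ℝ`) the restriction of `c` to `A p` is differentiable at almost every point of
`A p`. Such a point cannot be a limit from the left of points of `A p`, because the difference
quotients of `c` along `A p` would be bounded there. As a subset of `ℝ` has only countably many points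
that are isolated in it from the left, `A p` is null, and so is the countable union of the `A p`.
-/

/-- If no strictly increasing sequence in `s` with quotients bounded above converges to `x`, then the
left difference quotients of `c` at `x` within `s` tend to `-∞`, expressed without division. The
conclusion is vacuous when `x` is isolated from the left in `s`. -/
lemma eventually_left_of_not_exists_seq {s : Set ℝ} {c : ℝ → ℝ} {x : ℝ}
    (hx : ¬ ∃ Q : ℝ, ∃ u : ℕ → ℝ, (∀ h, u h ∈ s) ∧ StrictMono u ∧
      Tendsto u atTop (nhds x) ∧ ∀ h, (c (u h) - c x) / (x - u h) ≤ Q) (Q : ℝ) :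
    ∀ᶠ y in nhdsWithin x (Iio x), y ∈ s → Q * (x - y) < c y - c x := by
  by_contra hcon
  have hfr : ∃ᶠ y in nhdsWithin x (Iio x), y ∈ s ∧ c y - c x ≤ Q * (x - y) := by
    rw [not_eventually] at hcon
    exact hcon.mono fun y hy => by simpa using hy
  set t : Set ℝ := {y | y < x ∧ y ∈ s ∧ c y - c x ≤ Q * (x - y)} with ht
  have hex : ∀ z < x, ∃ y ∈ t, z < y := by
    intro z hz
    obtain ⟨y, hy, hzy⟩ := (hfr.and_eventually (Ioo_mem_nhdsLT hz)).exists
    exact ⟨y, ⟨hzy.2, hy⟩, hzy.1⟩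
  have hlub : IsLUB t x := by
    refine ⟨fun y hy => hy.1.le, fun z hz => ?_⟩
    by_contra! hzx
    obtain ⟨y, hy, hzy⟩ := hex z hzx
    exact absurd (hz hy) (not_le.2 hzy)
  obtain ⟨y₀, hy₀, -⟩ := hex (x - 1) (by linarith)
  obtain ⟨u, hu, hux, hlim, hut⟩ :=
    hlub.exists_seq_strictMono_tendsto_of_notMem (fun h => lt_irrefl x h.1) ⟨y₀, hy₀⟩
  refine hx ⟨Q, u, fun h => (hut h).2.1, hu, hlim, fun h => ?_⟩
  rw [div_le_iff₀ (sub_pos.2 (hux h))]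
  exact (hut h).2.2

/-- A set on which `c` is antitone, and at each of whose points the left difference quotients of `c`
along the set tend to `-∞`, is null. -/
lemma volume_eq_zero_of_antitoneOn {A : Set ℝ} {c : ℝ → ℝ} (hc : AntitoneOn c A)
    (hA : ∀ x ∈ A, ∀ Q : ℝ, ∀ᶠ y in nhdsWithin x (Iio x), y ∈ A → Q * (x - y) < c y - c x) :
    MeasureTheory.volume A = 0 := by
  have hdiff := hc.neg.ae_differentiableWithinAt_of_mem
  have hiso := (countable_setOfPred_isolated_left_within (s := A)).ae_notMem MeasureTheory.volume
  rw [MeasureTheory.measure_eq_zero_iff_ae_notMem]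
  filter_upwards [hdiff, hiso] with x hd hi hxA
  have : (nhdsWithin x (A ∩ Iio x)).NeBot := ⟨fun h => hi ⟨hxA, h⟩⟩
  obtain ⟨C, hC⟩ := (hd hxA).hasFDerivWithinAt.isBigO_sub.bound
  have h1 := (hA x hxA C).filter_mono
    (nhdsWithin_mono x (inter_subset_right (s := A) (t := Iio x)))
  have h2 := hC.filter_mono (nhdsWithin_mono x (inter_subset_left (s := A) (t := Iio x)))
  obtain ⟨y, ⟨h1, h2⟩, hyA, hy⟩ := ((h1.and h2).and self_mem_nhdsWithin).exists
  have h1 := h1 hyA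
  simp only [Real.norm_eq_abs] at h2
  rw [abs_sub_comm y x, abs_of_pos (sub_pos.2 (mem_Iio.1 hy))] at h2
  have := neg_abs_le (-c y - -c x)
  linarith

/-- **(Denjoy-type result.)** Let `Λ = [a,b]` be a compact interval and `c : ℝ → ℝ` an
arbitrary function. Let `D` be the set of points `λ₀ ∈ Λ` for which there exist
`Q(λ₀) ∈ ℝ` and a strictly increasing sequence `(λ_h) ⊆ Λ` converging to `λ₀` such that
`(c(λ_h) - c(λ₀))/(λ₀ - λ_h) ≤ Q(λ₀)` for all `h`. Then `Λ \ D` has one-dimensional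
Lebesgue measure zero. -/
theorem complement_of_bounded_left_difference_quotients_null
    (a b : ℝ) (hab : a ≤ b) (c : ℝ → ℝ) :
    MeasureTheory.volume
      (Set.Icc a b \
        {lam0 ∈ Set.Icc a b | ∃ Q : ℝ, ∃ lam : ℕ → ℝ,
          (∀ h, lam h ∈ Set.Icc a b) ∧ StrictMono lam ∧
          Filter.Tendsto lam Filter.atTop (nhds lam0) ∧
          ∀ h, (c (lam h) - c lam0) / (lam0 - lam h) ≤ Q}) = 0 := by
  let A : ℚ → Set ℝ := fun p => {x | x ∈ Icc a b ∧
    (∀ Q : ℝ, ∀ᶠ y in nhdsWithin x (Iio x), y ∈ Icc a b → Q * (x - y) < c y - c x) ∧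
    (p : ℝ) < x ∧ ∀ y ∈ Ioo (p : ℝ) x, y ∈ Icc a b → c x < c y}
  have hA : ∀ p, MeasureTheory.volume (A p) = 0 := by
    refine fun p => volume_eq_zero_of_antitoneOn (c := c) ?_ ?_
    · intro x hx y hy hxy
      rcases hxy.eq_or_lt with rfl | hlt
      · exact le_rfl
      · exact (hy.2.2.2 x ⟨hx.2.2.1, hlt⟩ hx.1).le
    · exact fun x hx Q => (hx.2.1 Q).mono fun y hy hyA => hy hyA.1
  refine MeasureTheory.measure_mono_null ?_ (MeasureTheory.measure_iUnion_null hA)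
  rintro x ⟨hx, hxD⟩
  have hbad := eventually_left_of_not_exists_seq (fun h => hxD ⟨hx, h⟩)
  obtain ⟨z, hz, hzs⟩ := mem_nhdsLT_iff_exists_Ioo_subset.1 (hbad 0)
  obtain ⟨p, hzp, hpx⟩ := exists_rat_btwn (mem_Iio.1 hz)
  refine mem_iUnion.2 ⟨p, hx, hbad, hpx, fun y hy hyI => ?_⟩
  have := hzs ⟨hzp.trans hy.1, hy.2⟩ hyI
  linarith
end
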